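/- arXiv:1605.04993 — 3 statements merged into one kernel-verified Lean document; each statement's English description precedes it below -/
import Mathlib

section
/- Let d ≥ 1, R > 0, q' > 0, let γ̃ ∈ ℝᵈ, let σ = (σ_{jk}) be a symmetric positive semidefinite d×d real matrix, let ψ : ℝ → ℝ be an arbitrary function and h̃ : ℝᵈ → ℝ an arbitrary function. Suppose u₁, u₂ : ℝᵈ → ℝ are continuous on the closed ball B̄_R(0), twice continuously differentiable on the open ball B_R(0), vanish on the sphere {x : |x| = R}, and satisfy, for i = 1, 2 and every x ∈ B_R(0), q'·u_i(x) − (1/2)·∑_{j,k} σ_{jk} ∂²_{jk}u_i(x) − ⟨∇u_i(x), γ̃⟩ + ψ(|∇u_i(x)|²) = h̃(x). Then u₁ = u₂ on B̄_R(0). -/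
open MeasureTheory Metric
open scoped RealInnerProductSpace

/-!
The difference `u₁ - u₂` attains its maximum over the closed ball. If that maximum were positive, it
would be attained in the interior, where `∇u₁ = ∇u₂` and `D²u₁ ≤ D²u₂`. The first-order terms of
the two equations, however nonlinear, then coincide, the second-order terms are ordered because
`σ ≥ 0`, and `q' > 0` forces `u₁ ≤ u₂` there, a contradiction.
-/

theorem deriv_deriv_nonpos_of_isLocalMax {f : ℝ → ℝ} {a : ℝ} (hmax : IsLocalMax f a)
    (hf : ContinuousAt f a) : deriv (deriv f) a ≤ 0 := by
  by_contra! hpos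
  have hmin : IsLocalMin f a := isLocalMin_of_deriv_deriv_pos hpos hmax.deriv_eq_zero hf
  have hconst : f =ᶠ[nhds a] fun _ => f a := by
    filter_upwards [hmax, hmin] with t hle hge using le_antisymm hle hge
  have hzero : deriv (deriv f) a = 0 := by simp [hconst.deriv.deriv_eq]
  exact hpos.ne' hzero

section SecondDerivative

variable {𝕜 E F : Type*} [NontriviallyNormedField 𝕜] [NormedAddCommGroup E] [NormedSpace 𝕜 E]
  [NormedAddCommGroup F] [NormedSpace 𝕜 F] {f g : E → F} {x : E}

theorem eventually_differentiableAt_of_contDiffAt_two (hf : ContDiffAt 𝕜 2 f x) :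
    ∀ᶠ y in nhds x, DifferentiableAt 𝕜 f y :=
  (hf.eventually (by simp)).mono fun _ hy => hy.differentiableAt (by simp)

theorem differentiableAt_fderiv_of_contDiffAt_two (hf : ContDiffAt 𝕜 2 f x) :
    DifferentiableAt 𝕜 (fderiv 𝕜 f) x :=
  (hf.fderiv_right (m := 1) (by norm_num)).differentiableAt (by simp)

theorem fderiv_fderiv_apply_const (hf : ContDiffAt 𝕜 2 f x) (v w : E) :
    fderiv 𝕜 (fun y => fderiv 𝕜 f y w) x v = fderiv 𝕜 (fderiv 𝕜 f) x v w := by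
  simp [fderiv_clm_apply (differentiableAt_fderiv_of_contDiffAt_two hf) (differentiableAt_const w)]

theorem fderiv_fderiv_sub (hf : ContDiffAt 𝕜 2 f x) (hg : ContDiffAt 𝕜 2 g x) :
    fderiv 𝕜 (fderiv 𝕜 (f - g)) x = fderiv 𝕜 (fderiv 𝕜 f) x - fderiv 𝕜 (fderiv 𝕜 g) x := by
  have hsub : fderiv 𝕜 (f - g) =ᶠ[nhds x] fderiv 𝕜 f - fderiv 𝕜 g := by
    filter_upwards [eventually_differentiableAt_of_contDiffAt_two hf,
      eventually_differentiableAt_of_contDiffAt_two hg] with y hfy hgy using fderiv_sub hfy hgy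
  rw [hsub.fderiv_eq, fderiv_sub (differentiableAt_fderiv_of_contDiffAt_two hf)
    (differentiableAt_fderiv_of_contDiffAt_two hg)]

theorem deriv_deriv_comp_add_smul (hf : ContDiffAt 𝕜 2 f x) (v : E) :
    deriv (deriv fun t : 𝕜 => f (x + t • v)) 0 = fderiv 𝕜 (fderiv 𝕜 f) x v v := by
  have hline (t : 𝕜) : HasDerivAt (fun s : 𝕜 => x + s • v) v t := by
    simpa using ((hasDerivAt_id t).smul_const v).const_add x
  have htendsto : Filter.Tendsto (fun t : 𝕜 => x + t • v) (nhds 0) (nhds x) := by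
    simpa using (hline 0).continuousAt.tendsto
  have hderiv : (deriv fun t : 𝕜 => f (x + t • v)) =ᶠ[nhds 0] fun t => fderiv 𝕜 f (x + t • v) v :=
    (htendsto.eventually (eventually_differentiableAt_of_contDiffAt_two hf)).mono fun t ht =>
      (ht.hasFDerivAt.comp_hasDerivAt t (hline t)).deriv
  have hderiv₂ : HasDerivAt (fun t : 𝕜 => fderiv 𝕜 f (x + t • v))
      (fderiv 𝕜 (fderiv 𝕜 f) x v) 0 :=
    HasFDerivAt.comp_hasDerivAt 0
      (by simpa using (differentiableAt_fderiv_of_contDiffAt_two hf).hasFDerivAt) (hline 0)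
  rw [hderiv.deriv_eq]
  simpa using (hderiv₂.clm_apply (hasDerivAt_const 0 v)).deriv

end SecondDerivative

section LocalMax

variable {E : Type*} [NormedAddCommGroup E] [NormedSpace ℝ E] {u v : E → ℝ} {x : E}

theorem fderiv_fderiv_apply_self_nonpos_of_isLocalMax (hmax : IsLocalMax u x)
    (hu : ContDiffAt ℝ 2 u x) (w : E) : fderiv ℝ (fderiv ℝ u) x w w ≤ 0 := by
  have hline : ContinuousAt (fun t : ℝ => x + t • w) 0 := by fun_prop
  have htendsto : Filter.Tendsto (fun t : ℝ => x + t • w) (nhds 0) (nhds x) := by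
    simpa using hline.tendsto
  rw [← deriv_deriv_comp_add_smul hu w]
  refine deriv_deriv_nonpos_of_isLocalMax ?_ (hu.continuousAt.comp_of_eq hline (by simp))
  simpa [IsLocalMax, IsMaxFilter] using htendsto.eventually hmax

theorem fderiv_eq_of_isLocalMax_sub (hmax : IsLocalMax (u - v) x) (hu : DifferentiableAt ℝ u x)
    (hv : DifferentiableAt ℝ v x) : fderiv ℝ u x = fderiv ℝ v x :=
  sub_eq_zero.mp ((fderiv_sub hu hv).symm.trans hmax.fderiv_eq_zero)

theorem fderiv_fderiv_apply_self_le_of_isLocalMax_sub (hmax : IsLocalMax (u - v) x)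
    (hu : ContDiffAt ℝ 2 u x) (hv : ContDiffAt ℝ 2 v x) (w : E) :
    fderiv ℝ (fderiv ℝ u) x w w ≤ fderiv ℝ (fderiv ℝ v) x w w := by
  simpa [fderiv_fderiv_sub hu hv] using
    fderiv_fderiv_apply_self_nonpos_of_isLocalMax hmax (hu.sub hv) w

end LocalMax

open scoped MatrixOrder Matrix.Norms.L2Operator in
theorem sum_mul_apply_apply_nonneg_of_posSemidef {ι E : Type*} [Fintype ι] [AddCommGroup E]
    [Module ℝ E] {σ : Matrix ι ι ℝ} (hσ : σ.PosSemidef) {T : LinearMap.BilinForm ℝ E}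
    (hT : ∀ v, 0 ≤ T v v) (b : ι → E) : 0 ≤ ∑ j, ∑ k, σ j k * T (b j) (b k) := by
  classical
  obtain ⟨B, rfl⟩ := CStarAlgebra.nonneg_iff_eq_star_mul_self.mp hσ.nonneg
  calc 0 ≤ ∑ i, T (∑ j, B i j • b j) (∑ k, B i k • b k) := Finset.sum_nonneg fun i _ => hT _
    _ = ∑ i, ∑ k, ∑ j, B i j * B i k * T (b j) (b k) := by
      simp [Finset.mul_sum, mul_assoc, mul_left_comm]
    _ = ∑ j, ∑ k, ∑ i, B i j * B i k * T (b j) (b k) := by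
      rw [Finset.sum_comm_cycle]
      exact Finset.sum_congr rfl fun j _ => Finset.sum_comm
    _ = ∑ j, ∑ k, (star B * B) j k * T (b j) (b k) := by
      simp [Matrix.mul_apply, Finset.sum_mul]

section Comparison

variable {ι : Type*} [Fintype ι] [DecidableEq ι]

/-- The quasilinear second-order operator
`u ↦ H(x, u, ∇u) - (1/2) ∑ⱼₖ σⱼₖ(x, ∇u) ∂²ⱼₖu`, evaluated at `x`. All terms of order at most one,
including the penalization, the drift and the source, are absorbed into `H`. -/
noncomputable def quasilinearOperator
    (σ : EuclideanSpace ℝ ι → EuclideanSpace ℝ ι → Matrix ι ι ℝ)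
    (H : EuclideanSpace ℝ ι → ℝ → EuclideanSpace ℝ ι → ℝ)
    (u : EuclideanSpace ℝ ι → ℝ) (x : EuclideanSpace ℝ ι) : ℝ :=
  H x (u x) (gradient u x) - (1 / 2) * ∑ j, ∑ k, σ x (gradient u x) j k *
    fderiv ℝ (fun y => fderiv ℝ u y (EuclideanSpace.single k 1)) x (EuclideanSpace.single j 1)

variable {σ : EuclideanSpace ℝ ι → EuclideanSpace ℝ ι → Matrix ι ι ℝ}
  {H : EuclideanSpace ℝ ι → ℝ → EuclideanSpace ℝ ι → ℝ}
  {u v : EuclideanSpace ℝ ι → ℝ} {x : EuclideanSpace ℝ ι} {Ω : Set (EuclideanSpace ℝ ι)}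

theorem quasilinearOperator_lt_of_isLocalMax_sub (hσ : ∀ p, (σ x p).PosSemidef)
    (hH : ∀ p, StrictMono fun r => H x r p) (hu : ContDiffAt ℝ 2 u x) (hv : ContDiffAt ℝ 2 v x)
    (hmax : IsLocalMax (u - v) x) (hlt : v x < u x) :
    quasilinearOperator σ H v x < quasilinearOperator σ H u x := by
  have hgrad : gradient u x = gradient v x := by
    rw [gradient, gradient, fderiv_eq_of_isLocalMax_sub hmax (hu.differentiableAt (by simp))
      (hv.differentiableAt (by simp))]
  have htrace := sum_mul_apply_apply_nonneg_of_posSemidef (hσ (gradient v x))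
    (T := (fderiv ℝ (fderiv ℝ v) x - fderiv ℝ (fderiv ℝ u) x).toBilinForm)
    (fun w => sub_nonneg.mpr (fderiv_fderiv_apply_self_le_of_isLocalMax_sub hmax hu hv w))
    (fun j => EuclideanSpace.single j 1)
  have hstrict := hH (gradient v x) hlt
  simp only [ContinuousLinearMap.toBilinForm_apply, _root_.sub_apply, mul_sub,
    Finset.sum_sub_distrib] at htrace
  simp only [quasilinearOperator, fderiv_fderiv_apply_const hu, fderiv_fderiv_apply_const hv, hgrad]
  linarith

theorem le_on_closure_of_quasilinearOperator_le (hΩ : IsOpen Ω) (hΩb : Bornology.IsBounded Ω)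
    (hσ : ∀ x ∈ Ω, ∀ p, (σ x p).PosSemidef) (hH : ∀ x ∈ Ω, ∀ p, StrictMono fun r => H x r p)
    (huc : ContinuousOn u (closure Ω)) (hvc : ContinuousOn v (closure Ω))
    (hud : ContDiffOn ℝ 2 u Ω) (hvd : ContDiffOn ℝ 2 v Ω)
    (hle : ∀ x ∈ frontier Ω, u x ≤ v x)
    (hop : ∀ x ∈ Ω, quasilinearOperator σ H u x ≤ quasilinearOperator σ H v x) :
    ∀ x ∈ closure Ω, u x ≤ v x := by
  intro z hz
  by_contra! hlt
  have hboundary : ∀ y ∈ closure Ω \ Ω, (u - v) y < (u - v) z := fun y hy =>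
    (sub_nonpos.mpr (hle y (hΩ.frontier_eq ▸ hy))).trans_lt (sub_pos.mpr hlt)
  obtain ⟨x, hx, hmax⟩ :=
    hΩb.isCompact_closure.exists_isMaxOn_mem_subset (huc.sub hvc) hz hboundary
  have hΩx : Ω ∈ nhds x := hΩ.mem_nhds hx
  have hpos : v x < u x := sub_pos.mp ((sub_pos.mpr hlt).trans_le (hmax hz))
  exact (hop x hx).not_gt <| quasilinearOperator_lt_of_isLocalMax_sub (hσ x hx) (hH x hx)
    (hud.contDiffAt hΩx) (hvd.contDiffAt hΩx)
    (hmax.isLocalMax (Filter.mem_of_superset hΩx subset_closure)) hpos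

theorem uniqueness_penalized_dirichlet_general (hΩ : IsOpen Ω) (hΩb : Bornology.IsBounded Ω)
    (hσ : ∀ x ∈ Ω, ∀ p, (σ x p).PosSemidef) (hH : ∀ x ∈ Ω, ∀ p, StrictMono fun r => H x r p)
    (huc : ContinuousOn u (closure Ω)) (hvc : ContinuousOn v (closure Ω))
    (hud : ContDiffOn ℝ 2 u Ω) (hvd : ContDiffOn ℝ 2 v Ω)
    (hb : Set.EqOn u v (frontier Ω))
    (hop : Set.EqOn (quasilinearOperator σ H u) (quasilinearOperator σ H v) Ω) :
    Set.EqOn u v (closure Ω) := fun x hx => le_antisymm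
  (le_on_closure_of_quasilinearOperator_le hΩ hΩb hσ hH huc hvc hud hvd
    (fun _ hy => (hb hy).le) (fun _ hy => (hop hy).le) x hx)
  (le_on_closure_of_quasilinearOperator_le hΩ hΩb hσ hH hvc huc hvd hud
    (fun _ hy => (hb hy).ge) (fun _ hy => (hop hy).ge) x hx)

end Comparison

/-- Uniqueness for the penalized non-linear Dirichlet problem
`q'u − (1/2)tr(σD²u) − ⟨∇u, γ̃⟩ + ψ(|∇u|²) = h̃` in `B_R(0)`, `u = 0` on `∂B_R(0)`. -/
theorem uniqueness_penalized_dirichlet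
    (d : ℕ) (hd : 1 ≤ d) (R : ℝ) (hR : 0 < R) (q' : ℝ) (hq' : 0 < q')
    (γ : EuclideanSpace ℝ (Fin d)) (σ : Matrix (Fin d) (Fin d) ℝ)
    (hσ : σ.PosSemidef)
    (ψ : ℝ → ℝ) (h' : EuclideanSpace ℝ (Fin d) → ℝ)
    (u₁ u₂ : EuclideanSpace ℝ (Fin d) → ℝ)
    (hu₁c : ContinuousOn u₁ (closedBall 0 R))
    (hu₂c : ContinuousOn u₂ (closedBall 0 R))
    (hu₁d : ContDiffOn ℝ 2 u₁ (ball 0 R))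
    (hu₂d : ContDiffOn ℝ 2 u₂ (ball 0 R))
    (hu₁b : ∀ x : EuclideanSpace ℝ (Fin d), ‖x‖ = R → u₁ x = 0)
    (hu₂b : ∀ x : EuclideanSpace ℝ (Fin d), ‖x‖ = R → u₂ x = 0)
    (heq₁ : ∀ x ∈ ball (0 : EuclideanSpace ℝ (Fin d)) R,
      q' * u₁ x
        - (1 / 2) * ∑ j, ∑ k, σ j k *
            fderiv ℝ (fun y => fderiv ℝ u₁ y (EuclideanSpace.single k 1)) x
              (EuclideanSpace.single j 1)
        - ⟪gradient u₁ x, γ⟫ + ψ (‖gradient u₁ x‖ ^ 2) = h' x)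
    (heq₂ : ∀ x ∈ ball (0 : EuclideanSpace ℝ (Fin d)) R,
      q' * u₂ x
        - (1 / 2) * ∑ j, ∑ k, σ j k *
            fderiv ℝ (fun y => fderiv ℝ u₂ y (EuclideanSpace.single k 1)) x
              (EuclideanSpace.single j 1)
        - ⟪gradient u₂ x, γ⟫ + ψ (‖gradient u₂ x‖ ^ 2) = h' x) :
    Set.EqOn u₁ u₂ (closedBall 0 R) := by
  have hb : Set.EqOn u₁ u₂ (frontier (ball 0 R)) := by
    rw [frontier_ball 0 hR.ne']
    exact fun x hx => (hu₁b x (mem_sphere_zero_iff_norm.mp hx)).trans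
      (hu₂b x (mem_sphere_zero_iff_norm.mp hx)).symm
  rw [← closure_ball 0 hR.ne'] at hu₁c hu₂c ⊢
  exact uniqueness_penalized_dirichlet_general (σ := fun _ _ => σ)
    (H := fun x r p => q' * r - ⟪p, γ⟫ + ψ (‖p‖ ^ 2) - h' x) isOpen_ball isBounded_ball
    (fun _ _ _ => hσ) (fun _ _ _ _ _ hrs => by dsimp only; gcongr) hu₁c hu₂c hu₁d hu₂d hb
    fun x hx => by dsimp only [quasilinearOperator]; linarith [heq₁ x hx, heq₂ x hx]
end

section
/- Let d ≥ 1, R > 0, q > 0, C₀ > 0, θ > 0, let γ ∈ ℝᵈ, let σ = (σ_{ij}) be a symmetric d×d real matrix with θ|ζ|² ≤ ⟨σζ, ζ⟩ for all ζ ∈ ℝᵈ, let ν be a finite Borel measure on ℝᵈ with ν({0}) = 0, ν₀ := ν(ℝᵈ) < ∞ and ν₁ := ∫_{ℝᵈ} |z| dν(z) < ∞, and let M ≥ 0. Then there exists K₀ > 0 such that for every K ≥ K₀ and every bounded measurable G : ℝᵈ → ℝ with |G(x)| ≤ M for all x, the function η₁ defined by η₁(x) = e^{K R²} − e^{K |x|²}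 for |x| < R and η₁(x) = G(x) for |x| ≥ R satisfies, for every x ∈ B_R(0): q·η₁(x) − (1/2)·∑_{i,j} σ_{ij} ∂²_{ij}η₁(x) − ⟨∇η₁(x), γ⟩ − ∫_{ℝᵈ} ( η₁(x+z) − η₁(x) − ⟨∇η₁(x), z⟩ ) dν(z) ≥ C₀·(1 + |x|²), where for x ∈ B_R(0) the gradient and Hessian of η₁ are those of the smooth formula x ↦ e^{K R²} − e^{K |x|²}, namely ∇η₁(x) = −2Ke^{K|x|²} x and ∂²_{ij}η₁(x) = −2Ke^{K|x|²}(δ_{ij} + 2K x_i x_j). -/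
open MeasureTheory Metric
open scoped RealInnerProductSpace

/-!
Write `E = exp (K|x|²)`.  The second-order term contributes
`K E (tr σ + 2K⟨σx, x⟩) ≥ K E θ (1 + 2K|x|²)`.  Convexity of `exp (K|·|²)` shows that a jump
landing inside the ball does not increase the barrier beyond its linear part, while a jump leaving
the ball gains at most `M + 2K E |x||z|`.  Drift and jumps therefore cost at most
`2K E a|x| + M ν(ℝᵈ)` with `a = |γ| + ∫ |z| dν`.  The cost linear in `|x|` is absorbed by half
of `θ` and the quadratic term once `K ≥ a²/θ²`; the remaining `K E θ/2` dominates every constant as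
`K` grows.
-/

/-- The integro-differential operator
`q u - ½ tr (σ D²u) - ⟨∇u, γ⟩ - ∫ (u(x + z) - u(x) - ⟨∇u, z⟩) dν(z)` at `x`, with the gradient `p`
and the Hessian `X` of `u` at `x` passed as separate arguments. -/
noncomputable def integroDiffOp {ι : Type*} [Fintype ι] (q : ℝ) (σ : Matrix ι ι ℝ)
    (γ : EuclideanSpace ℝ ι) (ν : Measure (EuclideanSpace ℝ ι)) (u : EuclideanSpace ℝ ι → ℝ)
    (p : EuclideanSpace ℝ ι) (X : Matrix ι ι ℝ) (x : EuclideanSpace ℝ ι) : ℝ :=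
  q * u x - (1 / 2) * ∑ i, ∑ j, σ i j * X i j - ⟪p, γ⟫ - ∫ z, (u (x + z) - u x - ⟪p, z⟫) ∂ν

section Barrier

variable {E : Type*} [NormedAddCommGroup E]

/-- The barrier `e^{KR²} - e^{K|y|²}` on the ball of radius `R`, glued to `G` outside of it. -/
noncomputable def expBarrier (K R : ℝ) (G : E → ℝ) (y : E) : ℝ :=
  if ‖y‖ < R then Real.exp (K * R ^ 2) - Real.exp (K * ‖y‖ ^ 2) else G y

variable {K R M : ℝ} {G : E → ℝ} {x : E}

lemma expBarrier_of_norm_lt (hx : ‖x‖ < R) :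
    expBarrier K R G x = Real.exp (K * R ^ 2) - Real.exp (K * ‖x‖ ^ 2) :=
  if_pos hx

lemma expBarrier_of_le_norm (hx : R ≤ ‖x‖) : expBarrier K R G x = G x :=
  if_neg hx.not_gt

lemma expBarrier_nonneg (hK : 0 ≤ K) (hx : ‖x‖ < R) : 0 ≤ expBarrier K R G x := by
  rw [expBarrier_of_norm_lt hx, sub_nonneg]
  gcongr

lemma abs_expBarrier_le (hK : 0 ≤ K) (hG : ∀ y, |G y| ≤ M) (y : E) :
    |expBarrier K R G y| ≤ max (Real.exp (K * R ^ 2)) M := by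
  rcases lt_or_ge ‖y‖ R with hy | hy
  · rw [abs_of_nonneg (expBarrier_nonneg hK hy), expBarrier_of_norm_lt hy]
    exact (sub_le_self _ (Real.exp_nonneg _)).trans (le_max_left _ _)
  · rw [expBarrier_of_le_norm hy]
    exact (hG y).trans (le_max_right _ _)

lemma measurable_expBarrier [MeasurableSpace E] [OpensMeasurableSpace E] (hG : Measurable G) :
    Measurable (expBarrier K R G) :=
  .ite (measurableSet_lt measurable_norm measurable_const) (by fun_prop) hG

variable [InnerProductSpace ℝ E]

/-- The gradient at `x` of `e^{KR²} - e^{K|x|²}`, given by its explicit formula. -/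
noncomputable def expBarrierGrad (K : ℝ) (x : E) : E :=
  (-(2 * K * Real.exp (K * ‖x‖ ^ 2))) • x

lemma integrable_increment [MeasurableSpace E] [BorelSpace E] [SecondCountableTopology E]
    {ν : Measure E} [IsFiniteMeasure ν] (hν : Integrable (fun z => ‖z‖) ν) {u : E → ℝ}
    (hu : Measurable u) {C : ℝ} (hC : ∀ y, |u y| ≤ C) (p x : E) :
    Integrable (fun z => u (x + z) - u x - ⟪p, z⟫) ν := by
  have hshift : Integrable (fun z => u (x + z)) ν :=
    .of_bound (hu.comp (measurable_const_add x)).aestronglyMeasurable C (.of_forall fun _ => hC _)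
  have hid : Integrable (fun z : E => z) ν :=
    (integrable_norm_iff measurable_id.aestronglyMeasurable).1 hν
  exact (hshift.sub (integrable_const _)).sub (hid.const_inner p)

lemma exp_mul_norm_sq_add_inner_le (hK : 0 ≤ K) (x z : E) :
    Real.exp (K * ‖x‖ ^ 2) + 2 * K * Real.exp (K * ‖x‖ ^ 2) * ⟪x, z⟫
      ≤ Real.exp (K * ‖x + z‖ ^ 2) := by
  have hz : 0 ≤ K * ‖z‖ ^ 2 := by positivity
  calc Real.exp (K * ‖x‖ ^ 2) + 2 * K * Real.exp (K * ‖x‖ ^ 2) * ⟪x, z⟫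
      = Real.exp (K * ‖x‖ ^ 2) * (2 * K * ⟪x, z⟫ + 1) := by ring
    _ ≤ Real.exp (K * ‖x‖ ^ 2) * Real.exp (K * (2 * ⟪x, z⟫ + ‖z‖ ^ 2)) := by
        gcongr
        linarith [Real.add_one_le_exp (K * (2 * ⟪x, z⟫ + ‖z‖ ^ 2))]
    _ = Real.exp (K * ‖x + z‖ ^ 2) := by
        rw [← Real.exp_add, norm_add_sq_real]
        ring_nf

lemma expBarrier_increment_le (hK : 0 ≤ K) (hM : 0 ≤ M) (hG : ∀ y, G y ≤ M) (hx : ‖x‖ < R)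
    (z : E) :
    expBarrier K R G (x + z) - expBarrier K R G x - ⟪expBarrierGrad K x, z⟫
      ≤ M + 2 * K * Real.exp (K * ‖x‖ ^ 2) * ‖x‖ * ‖z‖ := by
  rw [expBarrierGrad, real_inner_smul_left]
  rcases lt_or_ge ‖x + z‖ R with hxz | hxz
  · rw [expBarrier_of_norm_lt hxz, expBarrier_of_norm_lt hx]
    have hconvex := exp_mul_norm_sq_add_inner_le hK x z
    have hlinear : 0 ≤ 2 * K * Real.exp (K * ‖x‖ ^ 2) * ‖x‖ * ‖z‖ := by positivity
    linarith
  · rw [expBarrier_of_le_norm hxz]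
    have hinner : 2 * K * Real.exp (K * ‖x‖ ^ 2) * ⟪x, z⟫
        ≤ 2 * K * Real.exp (K * ‖x‖ ^ 2) * (‖x‖ * ‖z‖) := by
      gcongr
      exact real_inner_le_norm x z
    linarith [hG (x + z), expBarrier_nonneg (G := G) hK hx]

variable [MeasurableSpace E] {ν : Measure E} [IsFiniteMeasure ν]

lemma integrable_expBarrier_increment [BorelSpace E] [SecondCountableTopology E]
    (hν : Integrable (fun z => ‖z‖) ν) (hK : 0 ≤ K) (hGm : Measurable G)
    (hGbelow : BddBelow (Set.range G)) (hG : ∀ y, G y ≤ M) (x : E) :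
    Integrable
      (fun z => expBarrier K R G (x + z) - expBarrier K R G x - ⟪expBarrierGrad K x, z⟫) ν := by
  obtain ⟨m, hm⟩ := hGbelow
  have hGabs (y : E) : |G y| ≤ max |m| |M| :=
    abs_le_max_abs_abs (hm (Set.mem_range_self y)) (hG y)
  exact integrable_increment hν (measurable_expBarrier hGm) (abs_expBarrier_le hK hGabs) _ x

lemma integral_expBarrier_increment_le (hν : Integrable (fun z => ‖z‖) ν) (hK : 0 ≤ K)
    (hM : 0 ≤ M) (hG : ∀ y, G y ≤ M) (hx : ‖x‖ < R)
    (hint : Integrable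
      (fun z => expBarrier K R G (x + z) - expBarrier K R G x - ⟪expBarrierGrad K x, z⟫) ν) :
    ∫ z, (expBarrier K R G (x + z) - expBarrier K R G x - ⟪expBarrierGrad K x, z⟫) ∂ν
      ≤ M * ν.real Set.univ + 2 * K * Real.exp (K * ‖x‖ ^ 2) * ‖x‖ * ∫ z, ‖z‖ ∂ν := by
  have hlinear := hν.const_mul (2 * K * Real.exp (K * ‖x‖ ^ 2) * ‖x‖)
  calc ∫ z, (expBarrier K R G (x + z) - expBarrier K R G x - ⟪expBarrierGrad K x, z⟫) ∂ν
      ≤ ∫ z, (M + 2 * K * Real.exp (K * ‖x‖ ^ 2) * ‖x‖ * ‖z‖) ∂ν :=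
        integral_mono hint ((integrable_const M).add hlinear)
          (expBarrier_increment_le hK hM hG hx)
    _ = M * ν.real Set.univ + 2 * K * Real.exp (K * ‖x‖ ^ 2) * ‖x‖ * ∫ z, ‖z‖ ∂ν := by
        rw [integral_add (integrable_const M) hlinear, integral_const_mul, integral_const,
          smul_eq_mul, mul_comm M]

end Barrier

section Elliptic

variable {ι : Type*} [Fintype ι] {σ : Matrix ι ι ℝ} {θ : ℝ}

lemma le_diag_of_elliptic
    (hell : ∀ ζ : ι → ℝ, θ * (∑ i, ζ i ^ 2) ≤ ∑ i, ∑ j, σ i j * ζ i * ζ j) (i : ι) :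
    θ ≤ σ i i := by
  classical
  simpa [Pi.single_apply] using hell (Pi.single i 1)

lemma le_trace_of_elliptic [Nonempty ι] (hθ : 0 ≤ θ)
    (hell : ∀ ζ : ι → ℝ, θ * (∑ i, ζ i ^ 2) ≤ ∑ i, ∑ j, σ i j * ζ i * ζ j) :
    θ ≤ σ.trace := by
  obtain ⟨i₀⟩ := ‹Nonempty ι›
  calc θ ≤ σ i₀ i₀ := le_diag_of_elliptic hell i₀
    _ ≤ σ.trace := Finset.single_le_sum (f := fun i => σ i i)
        (fun i _ => hθ.trans (le_diag_of_elliptic hell i)) (Finset.mem_univ i₀)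

variable [DecidableEq ι]

/-- The Hessian at `x` of `e^{KR²} - e^{K|x|²}`, given by its explicit formula. -/
noncomputable def expBarrierHess (K : ℝ) (x : EuclideanSpace ℝ ι) : Matrix ι ι ℝ :=
  Matrix.of fun i j => -(2 * K * Real.exp (K * ‖x‖ ^ 2)) *
    ((if i = j then (1 : ℝ) else 0) + 2 * K * x i * x j)

lemma sum_mul_expBarrierHess (σ : Matrix ι ι ℝ) (K : ℝ) (x : EuclideanSpace ℝ ι) :
    ∑ i, ∑ j, σ i j * expBarrierHess K x i j
      = -(2 * K * Real.exp (K * ‖x‖ ^ 2)) *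
          (σ.trace + 2 * K * ∑ i, ∑ j, σ i j * x i * x j) := by
  have hentry (i j : ι) : σ i j * expBarrierHess K x i j
      = -(2 * K * Real.exp (K * ‖x‖ ^ 2)) *
          ((if i = j then σ i j else 0) + 2 * K * (σ i j * x i * x j)) := by
    rw [expBarrierHess, Matrix.of_apply]
    split_ifs <;> ring
  simp only [hentry, ← Finset.mul_sum, Finset.sum_add_distrib, Finset.sum_ite_eq,
    Finset.mem_univ, if_true, Matrix.trace, Matrix.diag_apply]

lemma sum_mul_expBarrierHess_le [Nonempty ι] (hθ : 0 ≤ θ)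
    (hell : ∀ ζ : ι → ℝ, θ * (∑ i, ζ i ^ 2) ≤ ∑ i, ∑ j, σ i j * ζ i * ζ j)
    {K : ℝ} (hK : 0 ≤ K) (x : EuclideanSpace ℝ ι) :
    ∑ i, ∑ j, σ i j * expBarrierHess K x i j
      ≤ -(2 * K * Real.exp (K * ‖x‖ ^ 2)) * (θ + 2 * K * (θ * ‖x‖ ^ 2)) := by
  have hquad : θ * ‖x‖ ^ 2 ≤ ∑ i, ∑ j, σ i j * x i * x j := by
    simpa only [EuclideanSpace.real_norm_sq_eq] using hell x
  rw [sum_mul_expBarrierHess, neg_mul, neg_mul, neg_le_neg_iff]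
  gcongr
  exact le_trace_of_elliptic hθ hell

end Elliptic

lemma le_integroDiffOp_expBarrier {ι : Type*} [Fintype ι] [DecidableEq ι] [Nonempty ι]
    {K R M q θ : ℝ} (hK : 0 ≤ K) (hM : 0 ≤ M) (hq : 0 ≤ q) (hθ : 0 ≤ θ)
    (γ : EuclideanSpace ℝ ι) {σ : Matrix ι ι ℝ}
    (hell : ∀ ζ : ι → ℝ, θ * (∑ i, ζ i ^ 2) ≤ ∑ i, ∑ j, σ i j * ζ i * ζ j)
    {ν : Measure (EuclideanSpace ℝ ι)} [IsFiniteMeasure ν] (hν : Integrable (fun z => ‖z‖) ν)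
    {G : EuclideanSpace ℝ ι → ℝ} (hG : ∀ y, G y ≤ M) {x : EuclideanSpace ℝ ι} (hx : ‖x‖ < R)
    (hint : Integrable
      (fun z => expBarrier K R G (x + z) - expBarrier K R G x - ⟪expBarrierGrad K x, z⟫) ν) :
    K * Real.exp (K * ‖x‖ ^ 2) *
          (θ + 2 * K * (θ * ‖x‖ ^ 2) - 2 * (‖γ‖ + ∫ z, ‖z‖ ∂ν) * ‖x‖)
        - M * ν.real Set.univ
      ≤ integroDiffOp q σ γ ν (expBarrier K R G) (expBarrierGrad K x) (expBarrierHess K x) x := by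
  have hzeroth : 0 ≤ q * expBarrier K R G x := mul_nonneg hq (expBarrier_nonneg hK hx)
  have hsecond := sum_mul_expBarrierHess_le hθ hell hK x
  have hdrift : ⟪expBarrierGrad K x, γ⟫ ≤ 2 * K * Real.exp (K * ‖x‖ ^ 2) * ‖x‖ * ‖γ‖ := by
    refine (real_inner_le_norm _ _).trans_eq ?_
    rw [expBarrierGrad, norm_smul, norm_neg, Real.norm_of_nonneg (by positivity)]
  have hjump := integral_expBarrier_increment_le hν hK hM hG hx hint
  rw [integroDiffOp]
  linarith

lemma two_mul_mul_le_of_sq_le_mul_sq {θ a K : ℝ} (hθ : 0 < θ) (haK : a ^ 2 ≤ K * θ ^ 2) (r : ℝ) :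
    2 * a * r ≤ θ / 2 + 2 * K * (θ * r ^ 2) := by
  refine le_of_mul_le_mul_left ?_ hθ
  calc θ * (2 * a * r) ≤ θ ^ 2 / 2 + 2 * a ^ 2 * r ^ 2 := by
        linarith [sq_nonneg (θ - 2 * (a * r))]
    _ ≤ θ ^ 2 / 2 + 2 * (K * θ ^ 2) * r ^ 2 := by gcongr
    _ = θ * (θ / 2 + 2 * K * (θ * r ^ 2)) := by ring

theorem barrier_supersolution_general {ι : Type*} [Fintype ι] [DecidableEq ι] [Nonempty ι]
    (R : ℝ) {q C₀ θ M : ℝ} (hq : 0 ≤ q) (hC₀ : 0 < C₀) (hθ : 0 < θ) (hM : 0 ≤ M)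
    (γ : EuclideanSpace ℝ ι) {σ : Matrix ι ι ℝ}
    (hell : ∀ ζ : ι → ℝ, θ * (∑ i, ζ i ^ 2) ≤ ∑ i, ∑ j, σ i j * ζ i * ζ j)
    {ν : Measure (EuclideanSpace ℝ ι)} [IsFiniteMeasure ν] (hν : Integrable (fun z => ‖z‖) ν) :
    ∃ K₀ > (0 : ℝ), ∀ K ≥ K₀, ∀ G : EuclideanSpace ℝ ι → ℝ,
      Measurable G → BddBelow (Set.range G) → (∀ x, G x ≤ M) →
      ∀ x ∈ ball (0 : EuclideanSpace ℝ ι) R,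
        Integrable
          (fun z => expBarrier K R G (x + z) - expBarrier K R G x - ⟪expBarrierGrad K x, z⟫) ν ∧
        C₀ * (1 + ‖x‖ ^ 2) ≤ integroDiffOp q σ γ ν
          (expBarrier K R G) (expBarrierGrad K x) (expBarrierHess K x) x := by
  set a : ℝ := ‖γ‖ + ∫ z, ‖z‖ ∂ν
  set B : ℝ := C₀ * (1 + R ^ 2) + M * ν.real Set.univ with hB
  have hB0 : 0 < B := by positivity
  refine ⟨max (a ^ 2 / θ ^ 2) (B / (θ / 2)), lt_max_of_lt_right (div_pos hB0 (half_pos hθ)), ?_⟩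
  intro K hK G hGm hGbelow hG x hx
  obtain ⟨haK, hBK⟩ := max_le_iff.1 hK
  have hK0 : 0 ≤ K := le_trans (by positivity) haK
  rw [div_le_iff₀ (by positivity)] at haK hBK
  have hxR : ‖x‖ < R := mem_ball_zero_iff.1 hx
  have hint := integrable_expBarrier_increment (R := R) hν hK0 hGm hGbelow hG x
  refine ⟨hint, ?_⟩
  calc C₀ * (1 + ‖x‖ ^ 2) ≤ C₀ * (1 + R ^ 2) := by gcongr
    _ = B - M * ν.real Set.univ := by rw [hB, add_sub_cancel_right]
    _ ≤ K * 1 * (θ / 2) - M * ν.real Set.univ := by rwa [mul_one, sub_le_sub_iff_right]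
    _ ≤ K * Real.exp (K * ‖x‖ ^ 2) * (θ + 2 * K * (θ * ‖x‖ ^ 2) - 2 * a * ‖x‖)
          - M * ν.real Set.univ := by
        gcongr
        · exact Real.one_le_exp (by positivity)
        · linarith [two_mul_mul_le_of_sq_le_mul_sq hθ haK ‖x‖]
    _ ≤ integroDiffOp q σ γ ν
          (expBarrier K R G) (expBarrierGrad K x) (expBarrierHess K x) x :=
        le_integroDiffOp_expBarrier hK0 hM hq hθ.le γ hell hν hG hxR hint

/-- Barrier (supersolution) construction: the function `e^{KR²} − e^{K|x|²}`, glued outside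
the ball to any uniformly bounded function `G`, is a supersolution of the integro-differential
operator for `K` large enough.  Inside the ball the gradient and Hessian are those of the
smooth formula, namely `∇η₁(x) = −2Ke^{K|x|²}x` and
`∂²ᵢⱼη₁(x) = −2Ke^{K|x|²}(δᵢⱼ + 2K xᵢ xⱼ)`. -/
theorem barrier_supersolution
    (d : ℕ) (hd : 1 ≤ d) (R q C₀ θ : ℝ) (hR : 0 < R) (hq : 0 < q) (hC₀ : 0 < C₀) (hθ : 0 < θ)
    (γ : EuclideanSpace ℝ (Fin d)) (σ : Matrix (Fin d) (Fin d) ℝ) (hσsym : σ.IsSymm)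
    (hell : ∀ ζ : Fin d → ℝ, θ * (∑ i, ζ i ^ 2) ≤ ∑ i, ∑ j, σ i j * ζ i * ζ j)
    (ν : Measure (EuclideanSpace ℝ (Fin d))) [IsFiniteMeasure ν]
    (hν00 : ν {0} = 0) (hν1 : Integrable (fun z => ‖z‖) ν)
    (M : ℝ) (hM : 0 ≤ M) :
    ∃ K₀ > (0 : ℝ), ∀ K ≥ K₀, ∀ G : EuclideanSpace ℝ (Fin d) → ℝ,
      Measurable G → (∀ x, |G x| ≤ M) →
      let η₁ : EuclideanSpace ℝ (Fin d) → ℝ := fun y =>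
        if ‖y‖ < R then Real.exp (K * R ^ 2) - Real.exp (K * ‖y‖ ^ 2) else G y
      ∀ x ∈ ball (0 : EuclideanSpace ℝ (Fin d)) R,
        C₀ * (1 + ‖x‖ ^ 2) ≤
          q * η₁ x
            - (1 / 2) * ∑ i, ∑ j, σ i j *
                (-(2 * K * Real.exp (K * ‖x‖ ^ 2)) *
                  ((if i = j then (1 : ℝ) else 0) + 2 * K * x i * x j))
            - ⟪(-(2 * K * Real.exp (K * ‖x‖ ^ 2))) • x, γ⟫
            - ∫ z, (η₁ (x + z) - η₁ x -
                ⟪(-(2 * K * Real.exp (K * ‖x‖ ^ 2))) • x, z⟫) ∂ν := by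
  have : Nonempty (Fin d) := Fin.pos_iff_nonempty.1 hd
  obtain ⟨K₀, hK₀, hsuper⟩ := barrier_supersolution_general R hq.le hC₀ hθ hM γ hell hν1
  refine ⟨K₀, hK₀, fun K hK G hGm hG => ?_⟩
  have hGbelow : BddBelow (Set.range G) :=
    ⟨-M, Set.forall_mem_range.2 fun y => (abs_le.1 (hG y)).1⟩
  exact fun x hx => (hsuper K hK G hGm hGbelow (fun y => (abs_le.1 (hG y)).2) x hx).2
end

section
/- Let d ≥ 1, let k ≥ 0 be an integer, let α ∈ [0,1] and R > 0. For a set D ⊆ ℝᵈ and a function g that is k-times continuously differentiable on D, define ‖g‖_{C^{k,α}(D)} := ∑_{m=0}^{k} ( sup_{x ∈ D} ‖D^m g(x)‖ + sup_{x,y ∈ D, x ≠ y} ‖D^m g(x) − D^m g(y)‖ / |x−y|^α ), where D^m g denotes the m-th iterated Fréchet derivative. Then there exist constants b > 0 and C > 0 and a linear map E from the real vector space of all functions ℝᵈ → ℝ to itself such that for every w : ℝᵈ → ℝ that is k-times continuously differentiable on the closed ball B̄_R(0) with ‖w‖_{C^{k,α}(B̄_R(0))} < ∞: (i) E(w)(x)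 = w(x) for all x ∈ B̄_R(0); (ii) E(w)(x) = 0 for all x outside the compact ball B̄_{R+b/2}(0); (iii) E(w) is k-times continuously differentiable on ℝᵈ and ‖E(w)‖_{C^{k,α}(ℝᵈ)} ≤ C·‖w‖_{C^{k,α}(B̄_R(0))}. -/
open Metric
open scoped ENNReal

/-- The `C^{k,α}` norm of `g` on a set `D`:
`∑_{m=0}^{k} ( sup_{x ∈ D} ‖D^m g(x)‖ + sup_{x ≠ y ∈ D} ‖D^m g(x) − D^m g(y)‖ / |x−y|^α )`,
valued in `ℝ≥0∞` (so that finiteness can be expressed). -/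
noncomputable def holderNormOn (d k : ℕ) (α : ℝ) (D : Set (EuclideanSpace ℝ (Fin d)))
    (g : EuclideanSpace ℝ (Fin d) → ℝ) : ℝ≥0∞ :=
  ∑ m ∈ Finset.range (k + 1),
    ((⨆ x ∈ D, (‖iteratedFDerivWithin ℝ m g D x‖₊ : ℝ≥0∞)) +
      ⨆ (x ∈ D) (y ∈ D) (_ : x ≠ y),
        (‖iteratedFDerivWithin ℝ m g D x - iteratedFDerivWithin ℝ m g D y‖₊ : ℝ≥0∞) /
          ENNReal.ofReal (‖x - y‖ ^ α))

/-!
Outside the ball, `w` is extended by a higher-order reflection `χ(x) ∑ⱼ λⱼ w(x - cⱼ ψ(x))`, where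
`χ` is a cutoff function, `ψ(x) = (|x|² / R² - 1) x` vanishes on the sphere, and the weights satisfy
`∑ⱼ λⱼ cⱼ ^ i = 0 ^ i` for `i ≤ k`. The derivative of a term `c ^ i L(x) v(x - c ψ(x))` is a sum of
terms of the same form, with `v` kept or replaced by `Dv` and `i` raised by at most one. For
derivatives of order at most `k`, the moment conditions therefore make the weighted sums over `j`
agree on the sphere with the corresponding terms with node `0`, which make up the derivative of `w`
itself. Each term is bounded in `C^{0,α}`, and Hölder bounds on the ball and on its complement
combine along a segment that crosses the sphere.
-/

open Set Filter Topology
open scoped ContDiff NNReal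

section HolderNorm

variable {E F G : Type*} [NormedAddCommGroup F]

/-- The supremum of `‖f‖` on `s`, in `ℝ≥0∞`: the first half of the `C^{0,α}` norm. -/
noncomputable def supENormOn (s : Set E) (f : E → F) : ℝ≥0∞ :=
  ⨆ x ∈ s, ‖f x‖ₑ

lemma enorm_le_supENormOn {s : Set E} {f : E → F} {x : E} (hx : x ∈ s) :
    ‖f x‖ₑ ≤ supENormOn s f :=
  le_iSup₂ (f := fun x (_ : x ∈ s) => ‖f x‖ₑ) x hx

variable [NormedAddCommGroup E] [NormedAddCommGroup G]

/-- The `α`-Hölder seminorm of `f` on `s`, in `ℝ≥0∞`: the second half of the `C^{0,α}` norm. For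
`α = 0` it is the oscillation of `f` on `s`. -/
noncomputable def holderESeminormOn (α : ℝ) (s : Set E) (f : E → F) : ℝ≥0∞ :=
  ⨆ (x ∈ s) (y ∈ s) (_ : x ≠ y), ‖f x - f y‖ₑ / ENNReal.ofReal (‖x - y‖ ^ α)

/-- The `C^{0,α}` norm on `s`, in `ℝ≥0∞`. -/
noncomputable def holderENormOn (α : ℝ) (s : Set E) (f : E → F) : ℝ≥0∞ :=
  supENormOn s f + holderESeminormOn α s f

variable {α : ℝ} {s t : Set E} {f g : E → F}

/-- Also valid for `C = ∞` and on the diagonal, where `edist x x ^ 0 = 1`. -/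
lemma holderESeminormOn_le_iff (hα : 0 ≤ α) {C : ℝ≥0∞} :
    holderESeminormOn α s f ≤ C ↔ ∀ x ∈ s, ∀ y ∈ s, ‖f x - f y‖ₑ ≤ C * edist x y ^ α := by
  simp only [holderESeminormOn, iSup_le_iff]
  refine forall₄_congr fun x _ y _ => ?_
  rcases eq_or_ne x y with rfl | hxy
  · simp
  · have hpos : 0 < ‖x - y‖ := norm_sub_pos_iff.2 hxy
    rw [forall_prop_of_true hxy, ENNReal.div_le_iff
      (by simpa using Real.rpow_pos_of_pos hpos α) ENNReal.ofReal_ne_top, edist_dist,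
      dist_eq_norm, ENNReal.ofReal_rpow_of_nonneg hpos.le hα]

lemma enorm_sub_le_holderESeminormOn_mul (hα : 0 ≤ α) {x y : E} (hx : x ∈ s) (hy : y ∈ s) :
    ‖f x - f y‖ₑ ≤ holderESeminormOn α s f * edist x y ^ α :=
  (holderESeminormOn_le_iff hα).1 le_rfl x hx y hy

lemma holderENormOn_le (hα : 0 ≤ α) {A B : ℝ≥0∞} (hA : ∀ x ∈ s, ‖f x‖ₑ ≤ A)
    (hB : ∀ x ∈ s, ∀ y ∈ s, ‖f x - f y‖ₑ ≤ B * edist x y ^ α) : holderENormOn α s f ≤ A + B :=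
  add_le_add (iSup₂_le hA) ((holderESeminormOn_le_iff hα).2 hB)

lemma holderENormOn_congr (hfg : EqOn f g s) : holderENormOn α s f = holderENormOn α s g := by
  unfold holderENormOn supENormOn holderESeminormOn
  congr 1
  · exact biSup_congr fun x hx => by rw [hfg hx]
  · exact biSup_congr fun x hx => biSup_congr fun y hy => by rw [hfg hx, hfg hy]

lemma holderENormOn_linearIsometryEquiv_comp [NormedSpace ℝ F] [NormedSpace ℝ G]
    (e : F ≃ₗᵢ[ℝ] G) : holderENormOn α s (fun x => e (f x)) = holderENormOn α s f := by
  simp only [holderENormOn, supENormOn, holderESeminormOn, ← map_sub, e.enorm_map]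

lemma holderENormOn_add_le (hα : 0 ≤ α) :
    holderENormOn α s (fun x => f x + g x) ≤ holderENormOn α s f + holderENormOn α s g := by
  unfold holderENormOn
  rw [add_add_add_comm]
  refine holderENormOn_le hα (fun x hx => (enorm_add_le _ _).trans
    (add_le_add (enorm_le_supENormOn hx) (enorm_le_supENormOn hx))) fun x hx y hy => ?_
  rw [add_sub_add_comm, add_mul]
  exact (enorm_add_le _ _).trans (add_le_add (enorm_sub_le_holderESeminormOn_mul hα hx hy)
    (enorm_sub_le_holderESeminormOn_mul hα hx hy))

lemma holderENormOn_zero : holderENormOn α s (fun _ => (0 : F)) = 0 := by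
  simp [holderENormOn, supENormOn, holderESeminormOn]

lemma holderENormOn_sum_le (hα : 0 ≤ α) {ι : Type*} (I : Finset ι) (f : ι → E → F) :
    holderENormOn α s (fun x => ∑ i ∈ I, f i x) ≤ ∑ i ∈ I, holderENormOn α s (f i) := by
  classical
  induction I using Finset.induction_on with
  | empty => simp [holderENormOn_zero]
  | insert i I hi ih =>
    simp only [Finset.sum_insert hi]
    exact (holderENormOn_add_le hα).trans (by gcongr)

lemma holderENormOn_const_smul_le [NormedSpace ℝ F] (hα : 0 ≤ α) (c : ℝ) :
    holderENormOn α s (fun x => c • f x) ≤ ‖c‖ₑ * holderENormOn α s f := by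
  rw [holderENormOn, holderENormOn, mul_add]
  refine holderENormOn_le hα (fun x hx => ?_) fun x hx y hy => ?_
  · rw [enorm_smul]
    gcongr
    exact enorm_le_supENormOn hx
  · rw [← smul_sub, enorm_smul, mul_assoc]
    gcongr
    exact enorm_sub_le_holderESeminormOn_mul hα hx hy

/-- `L` vanishes on `t \ s`, so the values of `f` there are irrelevant. -/
lemma holderENormOn_clm_apply_le [NormedSpace ℝ F] [NormedSpace ℝ G] (hα : 0 ≤ α)
    {L : E → F →L[ℝ] G} (hst : s ⊆ t) (hL : ∀ x ∈ t, x ∉ s → L x = 0) :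
    holderENormOn α t (fun x => L x (f x)) ≤ holderENormOn α t L * holderENormOn α s f := by
  have hLf {x y : E} (hx : x ∈ t) (hy : y ∈ s) : ‖(L x - L y) (f y)‖ₑ ≤
      holderESeminormOn α t L * edist x y ^ α * supENormOn s f :=
    ((L x - L y).le_opENorm _).trans (mul_le_mul'
      (enorm_sub_le_holderESeminormOn_mul hα hx (hst hy)) (enorm_le_supENormOn hy))
  have hexpand : supENormOn t L * supENormOn s f +
      (holderESeminormOn α t L * supENormOn s f + supENormOn t L * holderESeminormOn α s f) ≤
      holderENormOn α t L * holderENormOn α s f := by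
    calc _ ≤ supENormOn t L * supENormOn s f + (holderESeminormOn α t L * supENormOn s f +
          supENormOn t L * holderESeminormOn α s f) +
          holderESeminormOn α t L * holderESeminormOn α s f := le_self_add
      _ = _ := by unfold holderENormOn; ring
  refine (holderENormOn_le hα (fun x hx => ?_) fun x hx y hy => ?_).trans hexpand
  · by_cases hxs : x ∈ s
    · exact ((L x).le_opENorm _).trans
        (mul_le_mul' (enorm_le_supENormOn hx) (enorm_le_supENormOn hxs))
    · simp [hL x hx hxs]
  · rw [add_mul, mul_right_comm]
    by_cases hys : y ∈ s
    · by_cases hxs : x ∈ s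
      · calc ‖L x (f x) - L y (f y)‖ₑ = ‖(L x - L y) (f y) + L x (f x - f y)‖ₑ := by simp
          _ ≤ ‖(L x - L y) (f y)‖ₑ + ‖L x (f x - f y)‖ₑ := enorm_add_le _ _
          _ ≤ _ := by
            rw [mul_assoc (supENormOn t L)]
            exact add_le_add (hLf hx hys) (((L x).le_opENorm _).trans (mul_le_mul'
              (enorm_le_supENormOn hx) (enorm_sub_le_holderESeminormOn_mul hα hxs hys)))
      · simpa [hL x hx hxs] using (hLf hx hys).trans le_self_add
    · by_cases hxs : x ∈ s
      · simpa [hL y hy hys, edist_comm y x] using (hLf hy hxs).trans le_self_add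
      · simp [hL x hx hxs, hL y hy hys]

lemma holderENormOn_comp_le (hα : α ∈ Icc (0 : ℝ) 1) {φ : E → G} {t : Set G} {v : G → F} {K : ℝ≥0}
    (hφ : LipschitzOnWith K φ s) (hK : 1 ≤ K) (hst : MapsTo φ s t) :
    holderENormOn α s (fun x => v (φ x)) ≤ K * holderENormOn α t v := by
  have hK' : (1 : ℝ≥0∞) ≤ K := by exact_mod_cast hK
  rw [holderENormOn, holderENormOn, mul_add]
  refine holderENormOn_le hα.1 (fun x hx => ?_) fun x hx y hy => ?_
  · exact (enorm_le_supENormOn (hst hx)).trans (le_mul_of_one_le_left' hK')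
  calc ‖v (φ x) - v (φ y)‖ₑ ≤ holderESeminormOn α t v * edist (φ x) (φ y) ^ α :=
        enorm_sub_le_holderESeminormOn_mul hα.1 (hst hx) (hst hy)
    _ ≤ holderESeminormOn α t v * (K * edist x y) ^ α := by
        gcongr
        exacts [hα.1, hφ hx hy]
    _ = (K : ℝ≥0∞) ^ α * holderESeminormOn α t v * edist x y ^ α := by
        rw [ENNReal.mul_rpow_of_nonneg _ _ hα.1]; ring
    _ ≤ K * holderESeminormOn α t v * edist x y ^ α := by
        gcongr
        simpa using ENNReal.rpow_le_rpow_of_exponent_le hK' hα.2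

/-- A segment from `s` to `t` meets `s ∩ t`; compare the values of `f` through that point. -/
lemma enorm_sub_le_of_convex_union [NormedSpace ℝ E] (hα : 0 ≤ α) (hs : IsClosed s)
    (ht : IsClosed t) (hconv : Convex ℝ (s ∪ t)) {x y : E} (hx : x ∈ s) (hy : y ∈ t) :
    ‖f x - f y‖ₑ ≤ (holderESeminormOn α s f + holderESeminormOn α t f) * edist x y ^ α := by
  obtain ⟨z, hz, hzs, hzt⟩ := isPreconnected_closed_iff.1
    (convex_segment (𝕜 := ℝ) x y).isPreconnected s t hs ht
    (hconv.segment_subset (Or.inl hx) (Or.inr hy))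
    ⟨x, left_mem_segment ℝ x y, hx⟩ ⟨y, right_mem_segment ℝ x y, hy⟩
  have hdist : edist x z + edist z y = edist x y := by
    simp only [edist_dist, ← dist_add_dist_of_mem_segment hz,
      ENNReal.ofReal_add dist_nonneg dist_nonneg]
  calc ‖f x - f y‖ₑ = ‖(f x - f z) + (f z - f y)‖ₑ := by rw [sub_add_sub_cancel]
    _ ≤ ‖f x - f z‖ₑ + ‖f z - f y‖ₑ := enorm_add_le _ _
    _ ≤ holderESeminormOn α s f * edist x z ^ α + holderESeminormOn α t f * edist z y ^ α :=
      add_le_add (enorm_sub_le_holderESeminormOn_mul hα hx hzs)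
        (enorm_sub_le_holderESeminormOn_mul hα hzt hy)
    _ ≤ _ := by
      rw [add_mul]
      gcongr
      exacts [le_self_add.trans_eq hdist, le_add_self.trans_eq hdist]

lemma holderENormOn_union_le [NormedSpace ℝ E] (hα : 0 ≤ α) (hs : IsClosed s) (ht : IsClosed t)
    (hconv : Convex ℝ (s ∪ t)) :
    holderENormOn α (s ∪ t) f ≤ holderENormOn α s f + holderENormOn α t f := by
  unfold holderENormOn
  rw [add_add_add_comm]
  refine holderENormOn_le hα ?_ ?_
  · rintro x (hx | hx)
    exacts [(enorm_le_supENormOn hx).trans le_self_add, (enorm_le_supENormOn hx).trans le_add_self]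
  · rintro x (hx | hx) y (hy | hy)
    · exact (enorm_sub_le_holderESeminormOn_mul hα hx hy).trans (by gcongr; exact le_self_add)
    · exact enorm_sub_le_of_convex_union hα hs ht hconv hx hy
    · rw [enorm_sub_rev, edist_comm]
      exact enorm_sub_le_of_convex_union hα hs ht hconv hy hx
    · exact (enorm_sub_le_holderESeminormOn_mul hα hx hy).trans (by gcongr; exact le_add_self)

lemma exists_holderENormOn_le_of_hasCompactSupport [NormedSpace ℝ E] [NormedSpace ℝ F]
    (hf : ContDiff ℝ 1 f) (hfc : HasCompactSupport f) :
    ∃ C : ℝ≥0, ∀ α ∈ Icc (0 : ℝ) 1, holderENormOn α s f ≤ C := by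
  obtain ⟨B, hB⟩ := hf.continuous.bounded_above_of_compact_support hfc
  obtain ⟨K, hK⟩ := hf.lipschitzWith_of_hasCompactSupport hfc one_ne_zero
  have hB (x : E) : ‖f x‖ₑ ≤ B.toNNReal := by
    rw [← ofReal_norm]
    exact ENNReal.ofReal_le_ofReal (hB x)
  refine ⟨B.toNNReal + (K + 2 * B.toNNReal), fun α hα => ?_⟩
  push_cast
  refine holderENormOn_le hα.1 (fun x _ => hB x) fun x _ y _ => ?_
  rcases le_total (edist x y) 1 with h | h
  · have hpow : edist x y ≤ edist x y ^ α := by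
      simpa using ENNReal.rpow_le_rpow_of_exponent_ge h hα.2
    calc ‖f x - f y‖ₑ ≤ K * edist x y := by rw [← edist_eq_enorm_sub]; exact hK x y
      _ ≤ (K + 2 * B.toNNReal) * edist x y ^ α := by gcongr; exact le_self_add
  · have hpow : 1 ≤ edist x y ^ α := by
      simpa using ENNReal.rpow_le_rpow_of_exponent_le h hα.1
    calc ‖f x - f y‖ₑ ≤ ‖f x‖ₑ + ‖f y‖ₑ := enorm_sub_le
      _ ≤ 2 * B.toNNReal := by rw [two_mul]; exact add_le_add (hB x) (hB y)
      _ ≤ K + 2 * B.toNNReal := le_add_self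
      _ ≤ (K + 2 * B.toNNReal) * edist x y ^ α := le_mul_of_one_le_right' hpow

end HolderNorm

section ContDiffHolderNorm

variable {E F : Type*} [NormedAddCommGroup E] [NormedSpace ℝ E] [NormedAddCommGroup F]
  [NormedSpace ℝ F]

/-- The `C^{n,α}` norm on `s`, in `ℝ≥0∞`: the sum of the `C^{0,α}` norms of the derivatives of order
at most `n`. For real functions on Euclidean space it is `holderNormOn`, by definition. -/
noncomputable def contDiffHolderENormOn (n : ℕ) (α : ℝ) (s : Set E) (f : E → F) : ℝ≥0∞ :=
  ∑ m ∈ Finset.range (n + 1), holderENormOn α s (iteratedFDerivWithin ℝ m f s)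

variable {n : ℕ} {α : ℝ} {s : Set E} {f g : E → F}

lemma holderENormOn_iteratedFDerivWithin_zero :
    holderENormOn α s (iteratedFDerivWithin ℝ 0 f s) = holderENormOn α s f := by
  rw [iteratedFDerivWithin_zero_eq_comp]
  exact holderENormOn_linearIsometryEquiv_comp (continuousMultilinearCurryFin0 ℝ E F).symm

lemma holderENormOn_iteratedFDerivWithin_succ (hs : UniqueDiffOn ℝ s) (m : ℕ) :
    holderENormOn α s (iteratedFDerivWithin ℝ (m + 1) f s) =
      holderENormOn α s (iteratedFDerivWithin ℝ m (fderivWithin ℝ f s) s) := by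
  refine Eq.trans ?_
    (holderENormOn_linearIsometryEquiv_comp (continuousMultilinearCurryRightEquiv' ℝ m E F).symm)
  exact holderENormOn_congr fun _ hx => iteratedFDerivWithin_succ_eq_comp_right hs hx

lemma contDiffHolderENormOn_zero : contDiffHolderENormOn 0 α s f = holderENormOn α s f := by
  simp [contDiffHolderENormOn, holderENormOn_iteratedFDerivWithin_zero]

lemma contDiffHolderENormOn_succ (hs : UniqueDiffOn ℝ s) :
    contDiffHolderENormOn (n + 1) α s f =
      holderENormOn α s f + contDiffHolderENormOn n α s (fderivWithin ℝ f s) := by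
  simp only [contDiffHolderENormOn, Finset.sum_range_succ' _ (n + 1),
    holderENormOn_iteratedFDerivWithin_zero, holderENormOn_iteratedFDerivWithin_succ hs]
  exact add_comm _ _

lemma contDiffHolderENormOn_le_succ :
    contDiffHolderENormOn n α s f ≤ contDiffHolderENormOn (n + 1) α s f := by
  rw [contDiffHolderENormOn, contDiffHolderENormOn, Finset.sum_range_succ _ (n + 1)]
  exact le_self_add

lemma contDiffHolderENormOn_congr (hfg : EqOn f g s) :
    contDiffHolderENormOn n α s f = contDiffHolderENormOn n α s g :=
  Finset.sum_congr rfl fun m _ =>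
    holderENormOn_congr fun _ hx => iteratedFDerivWithin_congr hfg hx m

lemma contDiffHolderENormOn_add_le (hα : 0 ≤ α) (hs : UniqueDiffOn ℝ s) (hf : ContDiffOn ℝ n f s)
    (hg : ContDiffOn ℝ n g s) :
    contDiffHolderENormOn n α s (f + g) ≤
      contDiffHolderENormOn n α s f + contDiffHolderENormOn n α s g := by
  unfold contDiffHolderENormOn
  rw [← Finset.sum_add_distrib]
  refine Finset.sum_le_sum fun m hm => ?_
  have hmn : (m : ℕ∞ω) ≤ n := by exact_mod_cast Finset.mem_range_succ_iff.1 hm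
  rw [holderENormOn_congr fun x hx => iteratedFDerivWithin_add_apply
    ((hf x hx).of_le hmn) ((hg x hx).of_le hmn) hs hx]
  exact holderENormOn_add_le hα

end ContDiffHolderNorm

section BoundedOperator

variable {E F G : Type*} [NormedAddCommGroup E] [NormedSpace ℝ E] [NormedAddCommGroup F]
  [NormedSpace ℝ F] [NormedAddCommGroup G] [NormedSpace ℝ G]

/-- `T` maps `C^n` functions on `s` to `C^n` functions on `t` and is bounded for the `C^{n,α}`
norms, with one constant for all `α ∈ [0, 1]`. -/
def IsHolderBounded (n : ℕ) (s t : Set E) (T : (E → F) → E → G) : Prop :=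
  ∃ C : ℝ≥0, ∀ v, ContDiffOn ℝ n v s → ContDiffOn ℝ n (T v) t ∧
    ∀ α ∈ Icc (0 : ℝ) 1, contDiffHolderENormOn n α t (T v) ≤ C * contDiffHolderENormOn n α s v

namespace IsHolderBounded

variable {n : ℕ} {s t : Set E} {T T' : (E → F) → E → G}

lemma of_continuousOn (hT : ∀ v, ContinuousOn v s → ContinuousOn (T v) t)
    (hle : ∃ C : ℝ≥0, ∀ α ∈ Icc (0 : ℝ) 1, ∀ v,
      holderENormOn α t (T v) ≤ C * holderENormOn α s v) : IsHolderBounded 0 s t T := by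
  obtain ⟨C, hC⟩ := hle
  refine ⟨C, fun v hv => ⟨contDiffOn_zero.2 (hT v (contDiffOn_zero.1 hv)), fun α hα => ?_⟩⟩
  simpa only [contDiffHolderENormOn_zero] using hC α hα v

lemma add (ht : UniqueDiffOn ℝ t) (hT : IsHolderBounded n s t T) (hT' : IsHolderBounded n s t T') :
    IsHolderBounded n s t (fun v => T v + T' v) := by
  obtain ⟨C, hC⟩ := hT
  obtain ⟨C', hC'⟩ := hT'
  refine ⟨C + C', fun v hv => ⟨(hC v hv).1.add (hC' v hv).1, fun α hα => ?_⟩⟩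
  rw [ENNReal.coe_add, add_mul]
  exact (contDiffHolderENormOn_add_le hα.1 ht (hC v hv).1 (hC' v hv).1).trans
    (add_le_add ((hC v hv).2 α hα) ((hC' v hv).2 α hα))

lemma succ (hs : UniqueDiffOn ℝ s) (ht : UniqueDiffOn ℝ t) {T₀ : (E → F) → E → E →L[ℝ] G}
    {T₁ : (E → E →L[ℝ] F) → E → E →L[ℝ] G} (hT : IsHolderBounded 0 s t T)
    (hT₀ : IsHolderBounded n s t T₀) (hT₁ : IsHolderBounded n s t T₁)
    (hderiv : ∀ v, DifferentiableOn ℝ v s → ∀ x ∈ t,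
      HasFDerivWithinAt (T v) ((T₀ v + T₁ (fderivWithin ℝ v s)) x) t x) :
    IsHolderBounded (n + 1) s t T := by
  obtain ⟨C, hC⟩ := hT
  obtain ⟨C₀, hC₀⟩ := hT₀
  obtain ⟨C₁, hC₁⟩ := hT₁
  refine ⟨C + (C₀ + C₁), fun v hv => ?_⟩
  have hdiff := hderiv v (hv.differentiableOn (by simp))
  have hfderiv : EqOn (fderivWithin ℝ (T v) t) (T₀ v + T₁ (fderivWithin ℝ v s)) t :=
    fun x hx => (hdiff x hx).fderivWithin (ht x hx)
  obtain ⟨hv₀, hle₀⟩ := hC₀ v (hv.of_le (by simp))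
  obtain ⟨hv₁, hle₁⟩ := hC₁ _ (hv.fderivWithin hs (by simp))
  refine ⟨?_, fun α hα => ?_⟩
  · push_cast
    exact (contDiffOn_succ_iff_fderivWithin ht).2 ⟨fun x hx => (hdiff x hx).differentiableWithinAt,
      by simp, (hv₀.add hv₁).congr hfderiv⟩
  have hle := (hC v (hv.of_le (by simp))).2 α hα
  simp only [contDiffHolderENormOn_zero] at hle
  calc contDiffHolderENormOn (n + 1) α t (T v)
      = holderENormOn α t (T v) +
          contDiffHolderENormOn n α t (T₀ v + T₁ (fderivWithin ℝ v s)) := by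
        rw [contDiffHolderENormOn_succ ht, contDiffHolderENormOn_congr hfderiv]
    _ ≤ C * holderENormOn α s v + (C₀ * contDiffHolderENormOn n α s v +
          C₁ * contDiffHolderENormOn n α s (fderivWithin ℝ v s)) :=
        add_le_add hle ((contDiffHolderENormOn_add_le hα.1 ht hv₀ hv₁).trans
          (add_le_add (hle₀ α hα) (hle₁ α hα)))
    _ ≤ C * contDiffHolderENormOn (n + 1) α s v + (C₀ * contDiffHolderENormOn (n + 1) α s v +
          C₁ * contDiffHolderENormOn (n + 1) α s v) := by
        gcongr
        · rw [contDiffHolderENormOn_succ hs]; exact le_self_add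
        · exact contDiffHolderENormOn_le_succ
        · rw [contDiffHolderENormOn_succ hs]; exact le_add_self
    _ = _ := by push_cast; ring

end IsHolderBounded

end BoundedOperator

section Reflection

variable {E F G : Type*} [NormedAddCommGroup E] [NormedSpace ℝ E] [NormedAddCommGroup F]
  [NormedSpace ℝ F] [NormedAddCommGroup G] [NormedSpace ℝ G]

/-- Smooth functions with compact support in `U`. The coefficients of the reflection operators are
of this kind. -/
structure IsTestFunctionOn (U : Set E) (f : E → F) : Prop where
  contDiff : ContDiff ℝ ∞ f
  hasCompactSupport : HasCompactSupport f
  tsupport_subset : tsupport f ⊆ U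

namespace IsTestFunctionOn

variable {U : Set E} {f : E → F} {g : E → G}

lemma fderiv (hf : IsTestFunctionOn U f) : IsTestFunctionOn U (fderiv ℝ f) where
  contDiff := hf.contDiff.fderiv_right (by simp)
  hasCompactSupport := hf.hasCompactSupport.fderiv ℝ
  tsupport_subset := (tsupport_fderiv_subset ℝ).trans hf.tsupport_subset

lemma of_eq_zero (hf : IsTestFunctionOn U f) (hg : ContDiff ℝ ∞ g)
    (hfg : ∀ x, f x = 0 → g x = 0) : IsTestFunctionOn U g where
  contDiff := hg
  hasCompactSupport := hf.hasCompactSupport.mono fun x hx h => hx (hfg x h)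
  tsupport_subset :=
    (closure_mono fun x (hx : g x ≠ 0) h => hx (hfg x h)).trans hf.tsupport_subset

end IsTestFunctionOn

/-- The summand `c ^ i • L x (v (x - c • ψ x))` of a reflection operator, with displacement `ψ`,
node `c` and coefficient `L`. Differentiating it in `x` produces terms of the same form. -/
def reflTerm (ψ : E → E) (c : ℝ) (L : E → F →L[ℝ] G) (i : ℕ) (v : E → F) (x : E) : G :=
  c ^ i • L x (v (x - c • ψ x))

/-- The coefficient of `v` in the derivative of a `reflTerm` with coefficient `L`. -/
noncomputable def derivCoeff (L : E → F →L[ℝ] G) (x : E) : F →L[ℝ] E →L[ℝ] G :=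
  (fderiv ℝ L x).flip

/-- The coefficient of `fderiv ℝ v`, at the same power of the node, in the derivative of a
`reflTerm` with coefficient `L`. -/
noncomputable def postcompCoeff (L : E → F →L[ℝ] G) (x : E) : (E →L[ℝ] F) →L[ℝ] E →L[ℝ] G :=
  ContinuousLinearMap.compL ℝ E F G (L x)

/-- The coefficient of `fderiv ℝ v`, at the next power of the node, in the derivative of a
`reflTerm` with displacement `ψ` and coefficient `L`. -/
noncomputable def displaceCoeff (ψ : E → E) (L : E → F →L[ℝ] G) (x : E) :
    (E →L[ℝ] F) →L[ℝ] E →L[ℝ] G :=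
  -(ContinuousLinearMap.compL ℝ E F G (L x)).comp
    ((ContinuousLinearMap.compL ℝ E E F).flip (fderiv ℝ ψ x))

variable {U s t : Set E} {L : E → F →L[ℝ] G} {ψ : E → E} {c : ℝ} {v : E → F} {x : E}

namespace IsTestFunctionOn

lemma derivCoeff (hL : IsTestFunctionOn U L) : IsTestFunctionOn U (derivCoeff L) := by
  have hflip := LinearIsometryEquiv.contDiff (𝕜 := ℝ) (n := ∞) (E := E →L[ℝ] F →L[ℝ] G)
    (F := F →L[ℝ] E →L[ℝ] G) (ContinuousLinearMap.flipₗᵢ ℝ E F G)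
  refine hL.fderiv.of_eq_zero (hflip.comp hL.fderiv.contDiff) fun x hx => ?_
  simp [_root_.derivCoeff, hx]

lemma postcompCoeff (hL : IsTestFunctionOn U L) : IsTestFunctionOn U (postcompCoeff L) :=
  hL.of_eq_zero (contDiff_const.clm_apply hL.contDiff) fun x hx => by
    simp [_root_.postcompCoeff, hx]

lemma displaceCoeff (hL : IsTestFunctionOn U L) (hψ : ContDiff ℝ ∞ ψ) :
    IsTestFunctionOn U (displaceCoeff ψ L) :=
  hL.of_eq_zero (hL.postcompCoeff.contDiff.clm_comp
    (contDiff_const.clm_apply (hψ.fderiv_right (by simp)))).neg fun x hx => by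
    simp [_root_.displaceCoeff, hx]

end IsTestFunctionOn

lemma reflTerm_eventuallyEq_zero {i : ℕ} (hx : x ∉ tsupport L) :
    reflTerm ψ c L i v =ᶠ[𝓝 x] fun _ => 0 := by
  filter_upwards [notMem_tsupport_iff_eventuallyEq.1 hx] with y hy
  simp [reflTerm, hy]

lemma continuousOn_reflTerm (hU : IsOpen U) (hψ : Continuous ψ) (hL : Continuous L)
    (hLU : tsupport L ⊆ U) (hst : MapsTo (fun x => x - c • ψ x) (s ∩ U) t) {i : ℕ}
    (hv : ContinuousOn v t) : ContinuousOn (reflTerm ψ c L i v) s := by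
  have hcont : ContinuousOn (reflTerm ψ c L i v) (s ∩ U) :=
    (hL.continuousOn.clm_apply (hv.comp (by fun_prop) hst)).const_smul _
  intro x hx
  by_cases hxL : x ∈ tsupport L
  · exact (hcont x ⟨hx, hLU hxL⟩).mono_of_mem_nhdsWithin
      (inter_mem_nhdsWithin s (hU.mem_nhds (hLU hxL)))
  · exact (continuousAt_const.congr
      (reflTerm_eventuallyEq_zero hxL).symm).continuousWithinAt

lemma hasFDerivWithinAt_reflTerm (hψ : Differentiable ℝ ψ) (hL : Differentiable ℝ L)
    (hst : MapsTo (fun x => x - c • ψ x) s t) {v' : E → E →L[ℝ] F}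
    (hv : ∀ x ∈ t, HasFDerivWithinAt v (v' x) t x) {i : ℕ} (hx : x ∈ s) :
    HasFDerivWithinAt (reflTerm ψ c L i v)
      (reflTerm ψ c (derivCoeff L) i v x + (reflTerm ψ c (postcompCoeff L) i v' x +
        reflTerm ψ c (displaceCoeff ψ L) (i + 1) v' x)) s x := by
  have hφ : HasFDerivWithinAt (fun x => x - c • ψ x)
      (ContinuousLinearMap.id ℝ E - c • fderiv ℝ ψ x) s x :=
    ((hasFDerivAt_id x).sub ((hψ x).hasFDerivAt.const_smul c)).hasFDerivWithinAt
  have hcomp := (hv _ (hst hx)).comp x hφ hst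
  refine (((hL x).hasFDerivAt.hasFDerivWithinAt.clm_apply hcomp).const_smul
    (c ^ i)).congr_fderiv ?_
  ext h
  simp [reflTerm, derivCoeff, postcompCoeff, displaceCoeff, pow_succ, smul_smul, smul_sub,
    smul_add]
  abel

lemma hasFDerivWithinAt_reflTerm_of_tsupport_subset (hU : IsOpen U) (hψ : Differentiable ℝ ψ)
    (hL : Differentiable ℝ L) (hLU : tsupport L ⊆ U)
    (hst : MapsTo (fun x => x - c • ψ x) (s ∩ U) t) {v' : E → E →L[ℝ] F}
    (hv : ∀ x ∈ t, HasFDerivWithinAt v (v' x) t x) {i : ℕ} (hx : x ∈ s) :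
    HasFDerivWithinAt (reflTerm ψ c L i v)
      (reflTerm ψ c (derivCoeff L) i v x + (reflTerm ψ c (postcompCoeff L) i v' x +
        reflTerm ψ c (displaceCoeff ψ L) (i + 1) v' x)) s x := by
  by_cases hxL : x ∈ tsupport L
  · exact (hasFDerivWithinAt_reflTerm hψ hL hst hv ⟨hx, hLU hxL⟩).mono_of_mem_nhdsWithin
      (inter_mem_nhdsWithin s (hU.mem_nhds (hLU hxL)))
  · have hL0 := notMem_tsupport_iff_eventuallyEq.1 hxL
    simpa [reflTerm, derivCoeff, postcompCoeff, displaceCoeff, hL0.fderiv_eq, hL0.self_of_nhds]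
      using ((hasFDerivAt_const 0 x).congr_of_eventuallyEq
        (reflTerm_eventuallyEq_zero hxL)).hasFDerivWithinAt

lemma exists_holderENormOn_reflTerm_le (hψ : ContDiff ℝ ∞ ψ) (hL : IsTestFunctionOn U L)
    (hst : MapsTo (fun x => x - c • ψ x) (s ∩ U) t) (i : ℕ) :
    ∃ C : ℝ≥0, ∀ α ∈ Icc (0 : ℝ) 1, ∀ v : E → F,
      holderENormOn α s (reflTerm ψ c L i v) ≤ C * holderENormOn α t v := by
  have hφ : ContDiff ℝ ∞ fun x => x - c • ψ x := contDiff_id.sub (hψ.const_smul c)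
  obtain ⟨K, hK⟩ := ((hφ.of_le (by simp)).locallyLipschitz.locallyLipschitzOn
    (s := tsupport L)).exists_lipschitzOnWith_of_compact hL.hasCompactSupport
  obtain ⟨B, hB⟩ := exists_holderENormOn_le_of_hasCompactSupport
    (hL.contDiff.of_le (by simp)) hL.hasCompactSupport
  refine ⟨‖c ^ i‖₊ * (B * max K 1), fun α hα v => ?_⟩
  have hcomp := holderENormOn_comp_le (v := v) hα
    ((hK.weaken (le_max_left K 1)).mono inter_subset_right) (le_max_right K 1)
    (hst.mono_left (inter_subset_inter_right s hL.tsupport_subset))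
  have happly := holderENormOn_clm_apply_le (f := fun x => v (x - c • ψ x)) hα.1 (L := L)
    (inter_subset_left : s ∩ tsupport L ⊆ s) fun x hx hxL =>
      image_eq_zero_of_notMem_tsupport fun h => hxL ⟨hx, h⟩
  calc holderENormOn α s (reflTerm ψ c L i v)
      ≤ ‖c ^ i‖ₑ * holderENormOn α s (fun x => L x (v (x - c • ψ x))) :=
        holderENormOn_const_smul_le hα.1 _
    _ ≤ ‖c ^ i‖ₑ * (B * (↑(max K 1) * holderENormOn α t v)) := by
        gcongr
        exact happly.trans (mul_le_mul' (hB α hα) hcomp)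
    _ = _ := by push_cast; rw [enorm_eq_nnnorm]; ring

end Reflection

section Gluing

lemma union_closure_compl_eq_univ {X : Type*} [TopologicalSpace X] (s : Set X) :
    s ∪ closure sᶜ = univ :=
  univ_subset_iff.1 ((union_compl_self s).symm.subset.trans
    (union_subset_union_right s subset_closure))

variable {E F G : Type*} [NormedAddCommGroup E] [NormedSpace ℝ E] [NormedAddCommGroup F]
  [NormedSpace ℝ F] [NormedAddCommGroup G] [NormedSpace ℝ G]

lemma hasFDerivAt_of_union_eq_univ {s t : Set E} (hs : IsClosed s) (ht : IsClosed t)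
    (hst : s ∪ t = univ) {f : E → F} {f' : E →L[ℝ] F} {x : E}
    (hfs : x ∈ s → HasFDerivWithinAt f f' s x) (hft : x ∈ t → HasFDerivWithinAt f f' t x) :
    HasFDerivAt f f' x := by
  have hwithin {u : Set E} (hu : IsClosed u) (hfu : x ∈ u → HasFDerivWithinAt f f' u x) :
      HasFDerivWithinAt f f' u x := by
    by_cases hx : x ∈ u
    · exact hfu hx
    · exact .of_notMem_closure (by rwa [hu.closure_eq])
  rw [← hasFDerivWithinAt_univ, ← hst]
  exact (hwithin hs hfs).union (hwithin ht hft)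

/-- A reflection of order `k` across the frontier of `s`, defined on the part of `U` outside `s`.
The maps `x ↦ x - node j • displacement x` carry this part into `s` and fix the frontier, and the
weights extrapolate polynomials of degree at most `k` from the nodes to `0`. -/
structure HigherOrderReflection (k : ℕ) (s U : Set E) where
  displacement : E → E
  node : Fin (k + 1) → ℝ
  weight : Fin (k + 1) → ℝ
  contDiff : ContDiff ℝ ∞ displacement
  displacement_eq_zero : ∀ x ∈ frontier s, displacement x = 0
  mapsTo : ∀ j, MapsTo (fun x => x - node j • displacement x) (closure sᶜ ∩ U) s
  sum_weight_mul_node_pow : ∀ i ≤ k, ∑ j, weight j * node j ^ i = 0 ^ i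

namespace HigherOrderReflection

variable {k : ℕ} {s U : Set E} (S : HigherOrderReflection k s U)

/-- The function used outside `s`: the weighted sum of the `reflTerm`s of all nodes. -/
def outer (L : E → F →L[ℝ] G) (i : ℕ) (v : E → F) (x : E) : G :=
  ∑ j, S.weight j • reflTerm S.displacement (S.node j) L i v x

open Classical in
/-- The extension of `x ↦ 0 ^ i • L x (v x)` from `s` by `S.outer L i v`. Inside `s` it is written
as the `reflTerm` with node `0`, which has the same differentiation rule as the terms outside. -/
noncomputable def glue (L : E → F →L[ℝ] G) (i : ℕ) (v : E → F) (x : E) : G :=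
  if x ∈ s then reflTerm S.displacement 0 L i v x else S.outer L i v x

variable {L : E → F →L[ℝ] G} {i : ℕ} {v : E → F}

lemma eqOn_glue_reflTerm : EqOn (S.glue L i v) (reflTerm S.displacement 0 L i v) s :=
  fun _ hx => if_pos hx

lemma eqOn_glue_outer (hi : i ≤ k) : EqOn (S.glue L i v) (S.outer L i v) (closure sᶜ) := by
  intro x hx
  by_cases hxs : x ∈ s
  · have hψ : S.displacement x = 0 := S.displacement_eq_zero x <| by
      rw [frontier_eq_closure_inter_closure]
      exact ⟨subset_closure hxs, hx⟩
    rw [S.eqOn_glue_reflTerm hxs]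
    simp [outer, reflTerm, hψ, smul_smul, ← Finset.sum_smul, S.sum_weight_mul_node_pow i hi]
  · exact if_neg hxs

lemma mapsTo_zero : MapsTo (fun x => x - (0 : ℝ) • S.displacement x) (s ∩ U) s :=
  fun x hx => by simpa using hx.1

lemma continuous_glue (hs : IsClosed s) (hU : IsOpen U) (hL : IsTestFunctionOn U L) (hi : i ≤ k)
    (hv : ContinuousOn v s) : Continuous (S.glue L i v) := by
  have hterm {c : ℝ} {t : Set E} (hst : MapsTo (fun x => x - c • S.displacement x) (t ∩ U) s) :
      ContinuousOn (reflTerm S.displacement c L i v) t :=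
    continuousOn_reflTerm hU S.contDiff.continuous hL.contDiff.continuous hL.tsupport_subset hst hv
  rw [← continuousOn_univ, ← union_closure_compl_eq_univ s]
  refine ContinuousOn.union_of_isClosed ((hterm S.mapsTo_zero).congr S.eqOn_glue_reflTerm) ?_ hs
    isClosed_closure
  exact (continuousOn_finsetSum _ fun j _ => (hterm (S.mapsTo j)).const_smul _).congr
    (S.eqOn_glue_outer hi)

lemma hasFDerivAt_glue (hs : IsClosed s) (hU : IsOpen U) (hL : IsTestFunctionOn U L)
    (hi : i + 1 ≤ k) {v' : E → E →L[ℝ] F} (hv : ∀ x ∈ s, HasFDerivWithinAt v (v' x) s x) (x : E) :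
    HasFDerivAt (S.glue L i v)
      (S.glue (derivCoeff L) i v x + (S.glue (postcompCoeff L) i v' x +
        S.glue (displaceCoeff S.displacement L) (i + 1) v' x)) x := by
  have hterm {c : ℝ} {t : Set E} (hst : MapsTo (fun x => x - c • S.displacement x) (t ∩ U) s)
      (hx : x ∈ t) := hasFDerivWithinAt_reflTerm_of_tsupport_subset (i := i) hU
    (S.contDiff.differentiable (by simp)) (hL.contDiff.differentiable (by simp))
    hL.tsupport_subset hst hv hx
  have hik : i ≤ k := Nat.le_of_succ_le hi
  refine hasFDerivAt_of_union_eq_univ hs isClosed_closure (union_closure_compl_eq_univ s)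
    (fun hx => ?_) fun hx => ?_
  · simp only [S.eqOn_glue_reflTerm hx]
    exact (hterm S.mapsTo_zero hx).congr S.eqOn_glue_reflTerm (S.eqOn_glue_reflTerm hx)
  · simp only [S.eqOn_glue_outer hik hx, S.eqOn_glue_outer hi hx]
    have hsum := HasFDerivWithinAt.fun_sum (u := Finset.univ) fun j _ =>
      (hterm (S.mapsTo j) hx).const_smul (S.weight j)
    refine (hsum.congr (S.eqOn_glue_outer hik) (S.eqOn_glue_outer hik hx)).congr_fderiv ?_
    simp only [outer, smul_add, Finset.sum_add_distrib]

lemma exists_holderENormOn_glue_le (hs : IsClosed s) (hL : IsTestFunctionOn U L) (hi : i ≤ k) :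
    ∃ C : ℝ≥0, ∀ α ∈ Icc (0 : ℝ) 1, ∀ v : E → F,
      holderENormOn α univ (S.glue L i v) ≤ C * holderENormOn α s v := by
  obtain ⟨C₀, hC₀⟩ := exists_holderENormOn_reflTerm_le S.contDiff hL S.mapsTo_zero i
  choose C hC using fun j => exists_holderENormOn_reflTerm_le S.contDiff hL (S.mapsTo j) i
  refine ⟨C₀ + ∑ j, ‖S.weight j‖₊ * C j, fun α hα v => ?_⟩
  have hcover := union_closure_compl_eq_univ s
  calc holderENormOn α univ (S.glue L i v)
      ≤ holderENormOn α s (S.glue L i v) + holderENormOn α (closure sᶜ) (S.glue L i v) := by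
        rw [← hcover]
        exact holderENormOn_union_le hα.1 hs isClosed_closure (hcover ▸ convex_univ)
    _ = holderENormOn α s (reflTerm S.displacement 0 L i v) +
          holderENormOn α (closure sᶜ) (S.outer L i v) := by
        rw [holderENormOn_congr S.eqOn_glue_reflTerm, holderENormOn_congr (S.eqOn_glue_outer hi)]
    _ ≤ C₀ * holderENormOn α s v + ∑ j, ‖S.weight j‖ₑ * (C j * holderENormOn α s v) := by
        gcongr
        · exact hC₀ α hα v
        · refine (holderENormOn_sum_le hα.1 Finset.univ _).trans (Finset.sum_le_sum fun j _ => ?_)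
          exact (holderENormOn_const_smul_le hα.1 _).trans (by gcongr; exact hC j α hα v)
    _ = _ := by
        push_cast
        simp only [enorm_eq_nnnorm, add_mul, Finset.sum_mul, mul_assoc]

lemma isHolderBounded_zero_glue (hs : IsClosed s) (hU : IsOpen U) (hL : IsTestFunctionOn U L)
    (hi : i ≤ k) : IsHolderBounded 0 s univ (S.glue L i) :=
  .of_continuousOn (fun _ hv => (S.continuous_glue hs hU hL hi hv).continuousOn)
    (S.exists_holderENormOn_glue_le hs hL hi)

/-- The extension operator attached to a reflection and a cutoff function `χ`. -/
noncomputable def extend (χ : E → ℝ) : (E → F) →ₗ[ℝ] E → F where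
  toFun := S.glue (fun x => χ x • ContinuousLinearMap.id ℝ F) 0
  map_add' v w := by
    ext x
    by_cases hx : x ∈ s <;> simp [glue, outer, reflTerm, hx, Finset.sum_add_distrib]
  map_smul' c v := by
    ext x
    by_cases hx : x ∈ s <;> simp [glue, outer, reflTerm, hx, Finset.smul_sum, smul_comm c]

variable {χ : E → ℝ}

lemma eqOn_extend (hχ : EqOn χ 1 s) (w : E → F) : EqOn (S.extend χ w) w s :=
  fun x hx => (S.eqOn_glue_reflTerm hx).trans (by simp [reflTerm, hχ hx])

lemma extend_apply_eq_zero {x : E} (hx : χ x = 0) (w : E → F) : S.extend χ w x = 0 := by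
  simp [extend, glue, outer, reflTerm, hx]

end HigherOrderReflection

end Gluing

section GluingBounded

universe u

variable {E F G : Type u} [NormedAddCommGroup E] [NormedSpace ℝ E] [NormedAddCommGroup F]
  [NormedSpace ℝ F] [NormedAddCommGroup G] [NormedSpace ℝ G] {k : ℕ} {s U : Set E}

namespace HigherOrderReflection

theorem isHolderBounded_glue (S : HigherOrderReflection k s U) (hs : IsClosed s)
    (hs' : UniqueDiffOn ℝ s) (hU : IsOpen U) {L : E → F →L[ℝ] G} (hL : IsTestFunctionOn U L)
    {i n : ℕ} (hin : i + n ≤ k) : IsHolderBounded n s univ (S.glue L i) := by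
  induction n generalizing F G i with
  | zero => exact S.isHolderBounded_zero_glue hs hU hL hin
  | succ n ih =>
    refine (S.isHolderBounded_zero_glue hs hU hL (by omega)).succ hs' uniqueDiffOn_univ
      (ih hL.derivCoeff (i := i) (by omega))
      ((ih hL.postcompCoeff (i := i) (by omega)).add uniqueDiffOn_univ
        (ih (hL.displaceCoeff S.contDiff) (i := i + 1) (by omega))) fun v hv x _ => ?_
    exact (S.hasFDerivAt_glue hs hU hL (by omega)
      (fun y hy => (hv y hy).hasFDerivWithinAt) x).hasFDerivWithinAt

theorem isHolderBounded_extend (S : HigherOrderReflection k s U) (hs : IsClosed s)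
    (hs' : UniqueDiffOn ℝ s) (hU : IsOpen U) {χ : E → ℝ} (hχ : IsTestFunctionOn U χ) :
    IsHolderBounded k s univ (S.extend χ : (E → F) → E → F) :=
  S.isHolderBounded_glue hs hs' hU
    (hχ.of_eq_zero (hχ.contDiff.smul contDiff_const) fun x hx => by simp [hx]) (zero_add k).le

end HigherOrderReflection

end GluingBounded

section BallReflection

lemma sum_eval_lagrangeBasis_mul_pow {ι K : Type*} [Fintype ι] [DecidableEq ι] [Field K]
    {node : ι → K} (hnode : Function.Injective node) {i : ℕ} (hi : i < Fintype.card ι) (x : K) :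
    ∑ j, (Lagrange.basis Finset.univ node j).eval x * node j ^ i = x ^ i := by
  have hinterp := Lagrange.eq_interpolate (f := (Polynomial.X ^ i : Polynomial K))
    (s := Finset.univ) hnode.injOn (by simpa using hi)
  simpa [Lagrange.interpolate_apply, Polynomial.eval_finsetSum, mul_comm] using
    (congrArg (Polynomial.eval x) hinterp).symm

variable {V : Type*} {R c : ℝ}

/-- With `t = ‖x‖² / R² - 1`, this is `(1 - c t)² (1 + t) ≤ (1 - t)² (1 + t) ≤ 1`. -/
lemma norm_sub_smul_smul_self_le [NormedAddCommGroup V] [NormedSpace ℝ V] (hR : 0 < R)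
    (hc : c ∈ Icc (1 : ℝ) 2) {x : V} (hRx : R ≤ ‖x‖) (hxR : ‖x‖ ≤ 6 / 5 * R) :
    ‖x - c • (‖x‖ ^ 2 / R ^ 2 - 1) • x‖ ≤ R := by
  obtain ⟨hc1, hc2⟩ := hc
  set t := ‖x‖ ^ 2 / R ^ 2 - 1 with ht
  have hsq : ‖x‖ ^ 2 = R ^ 2 * (1 + t) := by rw [ht]; field_simp; ring
  have ht0 : 0 ≤ t := by
    rw [ht, sub_nonneg, one_le_div (by positivity)]
    gcongr
  have ht1 : t ≤ 1 / 2 := by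
    rw [ht, sub_le_iff_le_add, div_le_iff₀ (by positivity)]
    nlinarith
  have hct0 : 0 ≤ 1 - c * t := by nlinarith
  have hct1 : 1 - c * t ≤ 1 - t := by nlinarith
  have hfactor : (1 - c * t) ^ 2 * (1 + t) ≤ 1 := calc
    (1 - c * t) ^ 2 * (1 + t) ≤ (1 - t) ^ 2 * (1 + t) := by gcongr
    _ ≤ 1 := by nlinarith [mul_nonneg ht0 (mul_nonneg ht0 (by linarith : 0 ≤ 1 - t))]
  have hnorm : ‖x - c • t • x‖ = (1 - c * t) * ‖x‖ := by
    rw [smul_smul, ← norm_smul_of_nonneg hct0, sub_smul, one_smul]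
  refine (pow_le_pow_iff_left₀ (norm_nonneg _) hR.le two_ne_zero).1 ?_
  calc ‖x - c • t • x‖ ^ 2 = R ^ 2 * ((1 - c * t) ^ 2 * (1 + t)) := by
        rw [hnorm, mul_pow, hsq]; ring
    _ ≤ R ^ 2 := mul_le_of_le_one_right (by positivity) hfactor

lemma le_dist_of_mem_closure_compl_closedBall [PseudoMetricSpace V] {p x : V}
    (hx : x ∈ closure (closedBall p R)ᶜ) : R ≤ dist x p :=
  closure_minimal (fun _ hy => (not_le.1 hy).le)
    (isClosed_le continuous_const (continuous_id.dist continuous_const)) hx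

/-- The reflection across the sphere of radius `R` about `p` with displacement
`(‖x - p‖² / R² - 1) • (x - p)`. Its nodes lie in `[1, 2]`. -/
noncomputable def ballReflection [NormedAddCommGroup V] [InnerProductSpace ℝ V] (k : ℕ) (p : V)
    (hR : 0 < R) : HigherOrderReflection k (closedBall p R) (ball p (6 / 5 * R)) where
  displacement x := (‖x - p‖ ^ 2 / R ^ 2 - 1) • (x - p)
  node j := 1 + j / (k + 1)
  weight j := (Lagrange.basis Finset.univ (fun j : Fin (k + 1) => (1 + j / (k + 1) : ℝ)) j).eval 0
  contDiff := by
    have hsub : ContDiff ℝ ∞ fun x : V => x - p := contDiff_id.sub contDiff_const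
    exact (((hsub.norm_sq ℝ).div_const _).sub contDiff_const).smul hsub
  displacement_eq_zero x hx := by
    have hx : ‖x - p‖ = R := by simpa [dist_eq_norm] using frontier_closedBall_subset_sphere hx
    simp [hx, hR.ne']
  mapsTo j x hx := by
    have hj : (j : ℝ) / (k + 1) ≤ 1 := by
      rw [div_le_one (by positivity)]
      exact_mod_cast j.2.le
    have hle := norm_sub_smul_smul_self_le (x := x - p) hR
      ⟨le_add_of_nonneg_right (by positivity : (0 : ℝ) ≤ (j : ℝ) / (k + 1)), by linarith⟩
      (by simpa [dist_eq_norm] using le_dist_of_mem_closure_compl_closedBall hx.1)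
      (by simpa [dist_eq_norm] using (mem_ball.1 hx.2).le)
    simpa only [mem_closedBall, dist_eq_norm, sub_right_comm] using hle
  sum_weight_mul_node_pow i hi := by
    refine sum_eval_lagrangeBasis_mul_pow (fun j j' h => ?_) (by simpa using Nat.lt_succ_of_le hi) 0
    have hk : (k + 1 : ℝ) ≠ 0 := by positivity
    simpa [div_left_inj' hk, Fin.ext_iff] using h

lemma isTestFunctionOn_contDiffBump [NormedAddCommGroup V] [NormedSpace ℝ V] [HasContDiffBump V]
    [FiniteDimensional ℝ V] {p : V} (χ : ContDiffBump p) (hR : χ.rOut < R) :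
    IsTestFunctionOn (ball p R) χ where
  contDiff := χ.contDiff
  hasCompactSupport := χ.hasCompactSupport
  tsupport_subset := χ.tsupport_eq.trans_subset (closedBall_subset_ball hR)

end BallReflection

universe u in
theorem holder_extension_theorem_general {V F : Type u} [NormedAddCommGroup V]
    [InnerProductSpace ℝ V] [FiniteDimensional ℝ V] [NormedAddCommGroup F] [NormedSpace ℝ F]
    (k : ℕ) (p : V) {R R' : ℝ} (hR : 0 < R) (hRR' : R < R') :
    ∃ E : (V → F) →ₗ[ℝ] V → F, (∀ w, EqOn (E w) w (closedBall p R)) ∧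
      (∀ w, ∀ x ∉ closedBall p R', E w x = 0) ∧
      IsHolderBounded k (closedBall p R) univ E := by
  let χ : ContDiffBump p :=
    ⟨R, min R' (11 / 10 * R), hR, lt_min hRR' (by linarith)⟩
  let S := ballReflection k p hR
  have hχ : IsTestFunctionOn (ball p (6 / 5 * R)) χ :=
    isTestFunctionOn_contDiffBump χ ((min_le_right _ _).trans_lt (by linarith))
  have hball : UniqueDiffOn ℝ (closedBall p R) := uniqueDiffOn_convex (convex_closedBall p R) <| by
    rw [interior_closedBall p hR.ne']
    exact nonempty_ball.2 hR
  refine ⟨S.extend χ, S.eqOn_extend fun x hx => χ.one_of_mem_closedBall hx,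
    fun w x hx => S.extend_apply_eq_zero (χ.zero_of_le_dist ?_) w,
    S.isHolderBounded_extend isClosed_closedBall hball isOpen_ball hχ⟩
  exact (min_le_left _ _).trans (not_le.1 hx).le

/-- Stein-type extension theorem for Hölder spaces: there is a linear extension operator
`E : C^{k,α}(B̄_R(0)) → C^{k,α}_c(ℝᵈ)` with image supported in `B̄_{R+b/2}(0)` and
`‖E(w)‖_{C^{k,α}(ℝᵈ)} ≤ C‖w‖_{C^{k,α}(B̄_R(0))}`. -/
theorem holder_extension_theorem
    (d k : ℕ) (hd : 1 ≤ d) (α R : ℝ) (hα : α ∈ Set.Icc (0 : ℝ) 1) (hR : 0 < R) :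
    ∃ b > (0 : ℝ), ∃ C > (0 : ℝ),
      ∃ E : (EuclideanSpace ℝ (Fin d) → ℝ) →ₗ[ℝ] (EuclideanSpace ℝ (Fin d) → ℝ),
        ∀ w : EuclideanSpace ℝ (Fin d) → ℝ,
          ContDiffOn ℝ k w (closedBall 0 R) →
          holderNormOn d k α (closedBall 0 R) w < ⊤ →
          (∀ x ∈ closedBall (0 : EuclideanSpace ℝ (Fin d)) R, E w x = w x) ∧
          (∀ x ∉ closedBall (0 : EuclideanSpace ℝ (Fin d)) (R + b / 2), E w x = 0) ∧
          ContDiff ℝ k (E w) ∧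
          holderNormOn d k α Set.univ (E w) ≤
            ENNReal.ofReal C * holderNormOn d k α (closedBall 0 R) w := by
  obtain ⟨E, hE, hE0, C, hC⟩ := holder_extension_theorem_general (F := ℝ) k
    (0 : EuclideanSpace ℝ (Fin d)) hR (show R < R + 2 / 2 by norm_num)
  refine ⟨2, two_pos, C + 1, by positivity, E, fun w hw _ => ⟨hE w, hE0 w,
    contDiffOn_univ.1 (hC w hw).1, ((hC w hw).2 α hα).trans (mul_le_mul_left ?_ _)⟩⟩
  rw [← ENNReal.ofReal_coe_nnreal]
  exact ENNReal.ofReal_le_ofReal (by simp)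
end
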